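/- arXiv:1404.4786 — 2 statements merged into one kernel-verified Lean document; each statement's English description precedes it below -/
import Mathlib

section
/- For every nontrivial word w in the free group F_d on d generators, there exists a natural number N such that for every integer n ≥ N, the diagonal matrix diag(e^{2πi/n}, e^{−2πi/n}) belongs to w(SU(2)), the set of w-values in the special unitary group SU(2). -/
section
open Matrix Polynomial

noncomputable def vv (θ : ℝ) (b : Bool) : Fin 2 → ℂ :=
  if b then ![(Real.cos θ : ℂ), (Real.sin θ : ℂ)] else ![-(Real.sin θ : ℂ), (Real.cos θ : ℂ)]

noncomputable def PP (θ : ℝ) (b : Bool) : Matrix (Fin 2) (Fin 2) ℂ := vecMulVec (vv θ b) (vv θ b)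

noncomputable def GG (θ t : ℝ) (b : Bool) : Matrix (Fin 2) (Fin 2) ℂ :=
  Complex.exp (t * Complex.I) • PP θ b + Complex.exp (-(t * Complex.I)) • PP θ (!b)

lemma GG_mul (θ t : ℝ) (b : Bool) : GG θ t b * GG θ t (!b) = 1 := by
  have h : (Real.cos θ : ℂ)^2 + (Real.sin θ : ℂ)^2 = 1 := by
    exact_mod_cast Real.cos_sq_add_sin_sq θ
  have hz : Complex.exp (t * Complex.I) * Complex.exp (-(t * Complex.I)) = 1 := by
    rw [← Complex.exp_add]; simp
  generalize hc : (Real.cos θ : ℂ) = c at *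
  generalize hs : (Real.sin θ : ℂ) = s at *
  ext i j
  cases b <;> fin_cases i <;> fin_cases j <;>
    simp [GG, PP, vv, Matrix.mul_apply, Fin.sum_univ_two, vecMulVec_apply, -Complex.ofReal_cos, -Complex.ofReal_sin, hc, hs] <;>
    generalize Complex.exp (t * Complex.I) = z at * <;>
    generalize Complex.exp (-(t * Complex.I)) = y at * <;> grind

lemma GG_star (θ t : ℝ) (b : Bool) : star (GG θ t b) = GG θ t (!b) := by
  have h1 : (starRingEnd ℂ) (Complex.exp (t * Complex.I)) = Complex.exp (-(t * Complex.I)) := by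
    rw [← Complex.exp_conj]; simp
  have h2 : (starRingEnd ℂ) (Complex.exp (-(t * Complex.I))) = Complex.exp ((t * Complex.I)) := by
    rw [← Complex.exp_conj]; simp
  ext i j
  cases b <;> fin_cases i <;> fin_cases j <;>
    simp [GG, PP, vv, vecMulVec_apply, -Complex.ofReal_cos, -Complex.ofReal_sin, h1, h2, Matrix.star_apply, Complex.conj_ofReal] <;> ring

lemma GG_det (θ t : ℝ) (b : Bool) : (GG θ t b).det = 1 := by
  have h : (Real.cos θ : ℂ)^2 + (Real.sin θ : ℂ)^2 = 1 := by
    exact_mod_cast Real.cos_sq_add_sin_sq θ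
  have hz : Complex.exp (t * Complex.I) * Complex.exp (-(t * Complex.I)) = 1 := by
    rw [← Complex.exp_add]; simp
  generalize hc : (Real.cos θ : ℂ) = c at *
  generalize hs : (Real.sin θ : ℂ) = s at *
  rw [Matrix.det_fin_two]
  cases b <;>
    simp [GG, PP, vv, vecMulVec_apply, -Complex.ofReal_cos, -Complex.ofReal_sin, hc, hs] <;>
    generalize Complex.exp (t * Complex.I) = z at * <;>
    generalize Complex.exp (-(t * Complex.I)) = y at * <;> grind

lemma GG_zero (θ : ℝ) (b : Bool) : GG θ 0 b = 1 := by
  have h : (Real.cos θ : ℂ)^2 + (Real.sin θ : ℂ)^2 = 1 := by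
    exact_mod_cast Real.cos_sq_add_sin_sq θ
  generalize hc : (Real.cos θ : ℂ) = c at *
  generalize hs : (Real.sin θ : ℂ) = s at *
  ext i j
  cases b <;> fin_cases i <;> fin_cases j <;>
    simp [GG, PP, vv, vecMulVec_apply, -Complex.ofReal_cos, -Complex.ofReal_sin, hc, hs] <;> grind

lemma vv_dot {d : ℕ} (a b : Fin d × Bool) (h : a.1 = b.1 → a.2 = b.2) :
    vv (1 / ((a.1 : ℕ) + 1 : ℝ)) a.2 ⬝ᵥ vv (1 / ((b.1 : ℕ) + 1 : ℝ)) b.2 ≠ 0 := by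
  obtain ⟨i, p⟩ := a
  obtain ⟨j, q⟩ := b
  simp only at h ⊢
  set x : ℝ := 1 / ((i : ℕ) + 1 : ℝ) with hx
  set y : ℝ := 1 / ((j : ℕ) + 1 : ℝ) with hy
  have key : ∀ x : Fin d, 0 < (1 / ((x : ℕ) + 1 : ℝ)) ∧ (1 / ((x : ℕ) + 1 : ℝ)) ≤ 1 := by
    intro x
    refine ⟨by positivity, ?_⟩
    rw [div_le_one (by positivity)]
    have : (0:ℝ) ≤ (x:ℕ) := by positivity
    linarith
  have hx1 := key i
  have hy1 := key j
  rw [← hx] at hx1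
  rw [← hy] at hy1
  have hpi := Real.pi_gt_three
  have hc : Real.cos (x - y) ≠ 0 := by
    apply ne_of_gt
    apply Real.cos_pos_of_mem_Ioo
    constructor <;> linarith
  have hs : i ≠ j → Real.sin (x - y) ≠ 0 := by
    intro hij h0
    rw [Real.sin_eq_zero_iff_of_lt_of_lt (by linarith) (by linarith)] at h0
    have : x = y := by linarith
    rw [hx, hy] at this
    have h3 : ((i:ℕ):ℝ) = (j:ℕ) := by
      simpa using this
    exact hij (Fin.ext (by exact_mod_cast h3))
  have e1 : ∀ b, vv x b ⬝ᵥ vv y b = (Real.cos (x - y) : ℂ) := by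
    intro b
    rw [Real.cos_sub]
    cases b <;> simp [vv, dotProduct, Fin.sum_univ_two] <;> ring
  by_cases hpq : p = q
  · subst hpq
    rw [e1]
    exact_mod_cast hc
  · have hs' := hs (fun hij => hpq (h hij))
    have hs2 : (Real.sin (x - y) : ℂ) ≠ 0 := by exact_mod_cast hs'
    rw [Real.sin_sub] at hs2
    cases p <;> cases q <;> simp [vv, dotProduct, Fin.sum_univ_two] at hpq hs2 ⊢
    · intro h0; apply hs2; linear_combination -h0
    · intro h0; apply hs2; linear_combination h0

noncomputable abbrev PL {d : ℕ} (a : Fin d × Bool) := PP (1 / ((a.1 : ℕ) + 1 : ℝ)) a.2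
noncomputable abbrev GLt {d : ℕ} (t : ℝ) (a : Fin d × Bool) := GG (1 / ((a.1 : ℕ) + 1 : ℝ)) t a.2

lemma prod_form {d : ℕ} (L : List (Fin d × Bool)) : ∀ a, 
    List.IsChain (fun a b : Fin d × Bool => a.1 = b.1 → a.2 = b.2) (a :: L) →
    ∃ u : Fin 2 → ℂ, u ≠ 0 ∧ ((a :: L).map PL).prod = vecMulVec (vv (1 / ((a.1 : ℕ) + 1 : ℝ)) a.2) u := by
  induction L with
  | nil =>
    intro a _
    refine ⟨vv (1 / ((a.1 : ℕ) + 1 : ℝ)) a.2, ?_, by simp [PL, PP]⟩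
    intro h0
    apply vv_dot a a (fun _ => rfl)
    rw [h0]; simp
  | cons b L ih =>
    intro a h
    rw [List.isChain_cons_cons] at h
    obtain ⟨u, hu, hp⟩ := ih b h.2
    rw [List.map_cons, List.prod_cons, hp]
    refine ⟨(vv (1 / ((a.1 : ℕ) + 1 : ℝ)) a.2 ⬝ᵥ vv (1 / ((b.1 : ℕ) + 1 : ℝ)) b.2) • u, smul_ne_zero (vv_dot a b h.1) hu, ?_⟩
    rw [PL, PP, Matrix.vecMulVec_mul_vecMulVec]

lemma poly_form {d : ℕ} (L : List (Fin d × Bool)) : 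
    ∃ Q : Fin 2 → Fin 2 → ℂ[X], ∀ i j, (Q i j).natDegree ≤ 2 * L.length ∧
      (Q i j).coeff (2 * L.length) = (L.map PL).prod i j ∧
      ∀ t : ℝ, Complex.exp (t * Complex.I) ^ L.length * (L.map (GLt t)).prod i j = (Q i j).eval (Complex.exp (t * Complex.I)) := by
  induction L with
  | nil =>
    refine ⟨fun i j => C ((1 : Matrix (Fin 2) (Fin 2) ℂ) i j), fun i j => ?_⟩
    simp
  | cons a L ih =>
    obtain ⟨Q, hQ⟩ := ih
    have hd : ∀ p q : ℂ, (C p * X ^ 2 + C q : ℂ[X]).natDegree ≤ 2 := by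
      intro p q; compute_degree
    have hlen : 2 * (a :: L).length = 2 + 2 * L.length := by simp; ring
    refine ⟨fun i j => ∑ k, (C (PP (1 / ((a.1 : ℕ) + 1 : ℝ)) a.2 i k) * X ^ 2 + C (PP (1 / ((a.1 : ℕ) + 1 : ℝ)) (!a.2) i k)) * Q k j, fun i j => ⟨?_, ?_, ?_⟩⟩
    · rw [hlen]
      apply natDegree_sum_le_of_forall_le
      intro k _
      exact natDegree_mul_le_of_le (hd _ _) (hQ k j).1
    · rw [hlen, finsetSum_coeff, List.map_cons, List.prod_cons, Matrix.mul_apply]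
      refine Finset.sum_congr rfl fun k _ => ?_
      rw [coeff_mul_add_eq_of_natDegree_le (hd _ _) (hQ k j).1, (hQ k j).2.1]
      congr 1
      simp [PL, coeff_C]
    · intro t
      rw [eval_finsetSum, List.map_cons, List.prod_cons, Matrix.mul_apply, Finset.mul_sum]
      refine Finset.sum_congr rfl fun k _ => ?_
      rw [eval_mul, ← (hQ k j).2.2 t]
      have hz : Complex.exp (t * Complex.I) * Complex.exp (-(t * Complex.I)) = 1 := by
        rw [← Complex.exp_add]; simp
      generalize (List.map (GLt t) L).prod k j = M
      rw [List.length_cons, GLt, GG]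
      simp only [Matrix.add_apply, Matrix.smul_apply, smul_eq_mul, eval_add, eval_mul, eval_C, eval_pow, eval_X]
      generalize PP (1 / ((a.1 : ℕ) + 1 : ℝ)) a.2 i k = A
      generalize PP (1 / ((a.1 : ℕ) + 1 : ℝ)) (!a.2) i k = B
      generalize Complex.exp (t * Complex.I) = z at *
      generalize Complex.exp (-(t * Complex.I)) = y at *
      linear_combination (z ^ L.length * B * M) * hz

lemma exists_GLt_ne {d : ℕ} (L : List (Fin d × Bool)) (hL : L ≠ [])
    (hr : List.IsChain (fun a b : Fin d × Bool => a.1 = b.1 → a.2 = b.2) L) :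
    ∃ t : ℝ, (L.map (GLt t)).prod ≠ 1 := by
  by_contra! hcon
  obtain ⟨Q, hQ⟩ := poly_form L
  have hinf : (Set.range (fun t : ℝ => Complex.exp (t * Complex.I))).Infinite := by
    have : Set.InjOn (fun t : ℝ => Complex.exp (t * Complex.I)) (Set.Ioo 0 1) := by
      intro x hx y hy hxy
      have hpi := Real.pi_gt_three
      have := congrArg Complex.arg hxy
      simp only [Complex.arg_exp_mul_I] at this
      rw [(toIocMod_eq_self _).2, (toIocMod_eq_self _).2] at this
      · exact this
      · constructor <;> linarith [hy.1, hy.2]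
      · constructor <;> linarith [hx.1, hx.2]
    exact ((Set.Ioo_infinite (by norm_num : (0:ℝ) < 1)).image this).mono (Set.image_subset_range _ _)
  have hz : (L.map PL).prod = 0 := by
    ext i j
    have : Q i j = C ((1 : Matrix (Fin 2) (Fin 2) ℂ) i j) * X ^ L.length := by
      apply eq_of_infinite_eval_eq
      apply hinf.mono
      rintro _ ⟨t, rfl⟩
      have := (hQ i j).2.2 t
      rw [hcon] at this
      simp only [Set.mem_setOf_eq, eval_mul, eval_C, eval_pow, eval_X]
      rw [← this, mul_comm]
    rw [← (hQ i j).2.1, this]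
    have : 0 < L.length := List.length_pos_iff.2 hL
    rw [coeff_C_mul, coeff_X_pow, if_neg (by omega)]; simp
  cases L with
  | nil => exact hL rfl
  | cons a L =>
    obtain ⟨u, hu, hp⟩ := prod_form L a hr
    rw [hz] at hp
    have := vecMulVec_eq_zero.1 hp.symm
    rcases this with h | h
    · apply vv_dot a a (fun _ => rfl)
      rw [h]; simp
    · exact hu h

lemma cont_prod {d : ℕ} (L : List (Fin d × Bool)) : Continuous (fun t : ℝ => (L.map (GLt t)).prod) := by
  induction L with
  | nil => simpa using continuous_const
  | cons a L ih =>
    simp only [List.map_cons, List.prod_cons]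
    refine Continuous.mul ?_ ih
    unfold GLt GG
    fun_prop

lemma su2_form (M : Matrix.unitaryGroup (Fin 2) ℂ) (h : (M : Matrix (Fin 2) (Fin 2) ℂ).det = 1) :
    ∃ a b : ℂ, (M : Matrix (Fin 2) (Fin 2) ℂ) = !![a, -star b; b, star a] ∧ a * star a + b * star b = 1 := by
  have h1 : star (M : Matrix (Fin 2) (Fin 2) ℂ) * M = 1 := Matrix.UnitaryGroup.star_mul_self M
  have h2 : star (M : Matrix (Fin 2) (Fin 2) ℂ) = (M : Matrix (Fin 2) (Fin 2) ℂ).adjugate := by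
    calc star (M : Matrix (Fin 2) (Fin 2) ℂ) = star (M : Matrix (Fin 2) (Fin 2) ℂ) * (M * (M : Matrix (Fin 2) (Fin 2) ℂ).adjugate) := by
          rw [Matrix.mul_adjugate, h]; simp
      _ = _ := by rw [← mul_assoc, h1, one_mul]
  rw [Matrix.adjugate_fin_two] at h2
  have e1 := congrFun (congrFun h2 0) 0
  have e2 := congrFun (congrFun h2 0) 1
  simp [Matrix.star_apply] at e1 e2
  refine ⟨M.1 0 0, M.1 1 0, ?_, ?_⟩
  · ext i j
    fin_cases i <;> fin_cases j <;> simp [e1, e2]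
  · rw [Matrix.det_fin_two] at h
    simp [e1, e2]
    linear_combination h

lemma tr_lt (M : Matrix.unitaryGroup (Fin 2) ℂ) (h : (M : Matrix (Fin 2) (Fin 2) ℂ).det = 1)
    (h1 : (M : Matrix (Fin 2) (Fin 2) ℂ) ≠ 1) : ((M : Matrix (Fin 2) (Fin 2) ℂ) 0 0).re < 1 := by
  obtain ⟨a, b, hM, hab⟩ := su2_form M h
  rw [hM] at h1 ⊢
  simp
  by_contra! hc
  apply h1
  have := congrArg Complex.re hab
  simp [Complex.mul_re] at this
  have hai : a.im = 0 := by nlinarith [sq_nonneg b.re, sq_nonneg b.im, sq_nonneg a.im]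
  have hbr : b.re = 0 := by nlinarith [sq_nonneg b.re, sq_nonneg b.im, sq_nonneg a.im]
  have hbi : b.im = 0 := by nlinarith [sq_nonneg b.re, sq_nonneg b.im, sq_nonneg a.im]
  have har : a.re = 1 := by nlinarith
  have ha : a = 1 := Complex.ext har hai
  have hb : b = 0 := Complex.ext hbr hbi
  subst ha hb
  ext i j
  fin_cases i <;> fin_cases j <;> simp

lemma alg1 (a a' b b' r l m : ℂ) (hrC : r ^ 2 * (b * b' + (a - l) * (a' - m)) = 1) :
    !![r * b, r * (a' - m); -(r * (a - l)), r * b'] * !![r * b', -(r * (a' - m)); r * (a - l), r * b] = 1 := by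
  ext i j
  fin_cases i <;> fin_cases j <;> simp
  · linear_combination hrC
  · ring
  · ring
  · linear_combination hrC

lemma alg2 (a a' b b' r l m : ℂ) (hlm : l * m = 1) (hsum : a + a' = l + m) (hab : a * a' + b * b' = 1) :
    !![a, -b'; b, a'] * !![r * b', -(r * (a' - m)); r * (a - l), r * b] =
      !![r * b', -(r * (a' - m)); r * (a - l), r * b] * diagonal ![l, m] := by
  ext i j
  fin_cases i <;> fin_cases j <;> simp [Matrix.mul_apply, Fin.sum_univ_two]
  · ring
  · linear_combination -r*hab + r*m*hsum + r * hlm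
  · linear_combination r*hab -r*l*hsum - r * hlm
  · ring

lemma conj_diag (M : Matrix.unitaryGroup (Fin 2) ℂ) (h : (M : Matrix (Fin 2) (Fin 2) ℂ).det = 1)
    (l m : ℂ) (hlm : l * m = 1) (hs : star l = m) (ht : ((M : Matrix (Fin 2) (Fin 2) ℂ) 0 0).re = l.re) :
    ∃ U : Matrix.unitaryGroup (Fin 2) ℂ, (U : Matrix (Fin 2) (Fin 2) ℂ).det = 1 ∧
      ((U⁻¹ * M * U : Matrix.unitaryGroup (Fin 2) ℂ) : Matrix (Fin 2) (Fin 2) ℂ) = diagonal ![l, m] := by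
  obtain ⟨a, b, hM, hab⟩ := su2_form M h
  rw [hM] at ht
  simp at ht
  have hsum : a + star a = l + m := by
    rw [← hs]
    apply Complex.ext <;> simp [ht]
  by_cases hv : star b = 0 ∧ a - l = 0
  · refine ⟨1, by simp, ?_⟩
    have hb : b = 0 := by simpa using hv.1
    have ha : a = l := sub_eq_zero.1 hv.2
    subst ha hb
    simp only [inv_one, one_mul, mul_one, hM]
    ext i j
    fin_cases i <;> fin_cases j <;> simp [← hs]
  · set r2 : ℝ := Complex.normSq b + Complex.normSq (a - l) with hr2
    have hpos : 0 < r2 := by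
      by_contra! hc
      apply hv
      have h1 := Complex.normSq_nonneg b
      have h2 := Complex.normSq_nonneg (a - l)
      constructor
      · rw [star_eq_zero, ← Complex.normSq_eq_zero]; linarith
      · rw [← Complex.normSq_eq_zero]; linarith
    set r : ℝ := (Real.sqrt r2)⁻¹ with hr
    have hrr : r ^ 2 * r2 = 1 := by
      rw [hr, inv_pow, Real.sq_sqrt hpos.le]; field_simp
    have hrC : (r : ℂ) ^ 2 * (b * star b + (a - l) * (star a - m)) = 1 := by
      rw [← hs, ← star_sub]
      have h1 : b * star b = (Complex.normSq b : ℂ) := Complex.mul_conj b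
      have h2 : (a - l) * star (a - l) = (Complex.normSq (a-l) : ℂ) := Complex.mul_conj _
      rw [h1, h2]
      exact_mod_cast hrr
    have hsr : star (r : ℂ) = r := Complex.conj_ofReal r
    have hsm : star m = l := by rw [← hs, star_star]
    let V : Matrix (Fin 2) (Fin 2) ℂ := !![r * star b, -(r * (star a - m)); r * (a - l), r * b]
    have hVs : star V = !![r * b, r * (star a - m); -(r * (a - l)), r * star b] := by
      ext i j
      fin_cases i <;> fin_cases j <;> simp only [V, Matrix.star_apply] <;> simp [-RCLike.star_def, hs, hsm, hsr, mul_comm]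
    have hV1 : star V * V = 1 := by
      rw [hVs]
      exact alg1 _ _ _ _ _ _ _ hrC
    have hVU : V ∈ Matrix.unitaryGroup (Fin 2) ℂ := Matrix.mem_unitaryGroup_iff'.2 hV1
    have hMV : (M : Matrix (Fin 2) (Fin 2) ℂ) * V = V * diagonal ![l, m] := by
      rw [hM]
      exact alg2 _ _ _ _ _ _ _ hlm hsum hab
    refine ⟨⟨V, hVU⟩, ?_, ?_⟩
    · simp only [V, Matrix.det_fin_two_of]
      linear_combination hrC
    · have : ((⟨V, hVU⟩⁻¹ * M * ⟨V, hVU⟩ : Matrix.unitaryGroup (Fin 2) ℂ) : Matrix (Fin 2) (Fin 2) ℂ) = star V * M * V := rfl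
      rw [this, mul_assoc, hMV, ← mul_assoc, hV1, one_mul]

end


/-- The set of `w`-values in the subgroup of `G` given by the set `S`:
elements obtained by evaluating the word `w` at a `d`-tuple of elements of `S`. -/
def wordValuesIn {d : ℕ} {G : Type*} [Group G] (w : FreeGroup (Fin d)) (S : Set G) : Set G :=
  {x | ∃ g : Fin d → G, (∀ i, g i ∈ S) ∧ FreeGroup.lift g w = x}

/-- `SU(n)`, the special unitary group, as the subset of the unitary group consisting of
matrices of determinant 1. -/
def SU (n : ℕ) : Set (Matrix.unitaryGroup (Fin n) ℂ) :=
  {M | (M : Matrix (Fin n) (Fin n) ℂ).det = 1}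

/-- For every nontrivial word `w ∈ F_d`, there is `N` such that for all `n ≥ N`,
`diag(e^{2πi/n}, e^{-2πi/n})` is a `w`-value in `SU(2)`. -/
theorem diag_root_of_unity_mem_wordValues {d : ℕ} (w : FreeGroup (Fin d)) (hw : w ≠ 1) :
    ∃ N : ℕ, ∀ n : ℕ, N ≤ n →
      ∃ u ∈ wordValuesIn w (SU 2),
        (u : Matrix (Fin 2) (Fin 2) ℂ) =
          Matrix.diagonal
            ![Complex.exp (2 * Real.pi * Complex.I / n),
              Complex.exp (-(2 * Real.pi * Complex.I) / n)] := by
  classical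
  let g : ℝ → Fin d → Matrix.unitaryGroup (Fin 2) ℂ := fun t i =>
    ⟨GG (1 / ((i : ℕ) + 1 : ℝ)) t true, Matrix.mem_unitaryGroup_iff.2 (by rw [GG_star]; exact GG_mul _ _ _)⟩
  have hg : ∀ t, ((FreeGroup.lift (g t) w : Matrix.unitaryGroup (Fin 2) ℂ) : Matrix (Fin 2) (Fin 2) ℂ)
      = (w.toWord.map (GLt t)).prod := by
    intro t
    conv_lhs => rw [← FreeGroup.mk_toWord (x := w), FreeGroup.lift_mk]
    generalize w.toWord = L
    induction L with
    | nil => simp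
    | cons a L ih =>
      rw [List.map_cons, List.prod_cons, List.map_cons, List.prod_cons, ← ih, Matrix.UnitaryGroup.mul_val]
      congr 1
      obtain ⟨i, b⟩ := a
      cases b
      · exact GG_star _ _ _
      · rfl
  have hdet : ∀ t, (w.toWord.map (GLt t)).prod.det = 1 := by
    intro t
    generalize w.toWord = L
    induction L with
    | nil => simp
    | cons a L ih => rw [List.map_cons, List.prod_cons, Matrix.det_mul, ih, GG_det, one_mul]
  have h0 : (w.toWord.map (GLt 0)).prod = 1 := by
    generalize w.toWord = L
    induction L with
    | nil => simp
    | cons a L ih => rw [List.map_cons, List.prod_cons, ih, mul_one]; exact GG_zero _ _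
  obtain ⟨t, ht⟩ := exists_GLt_ne w.toWord (by simpa using hw) FreeGroup.isReduced_toWord
  have hlt := tr_lt (FreeGroup.lift (g t) w) (by rw [hg]; exact hdet t) (by rw [hg]; exact ht)
  rw [hg] at hlt
  have hlim : Filter.Tendsto (fun n : ℕ => Real.cos (2 * Real.pi / n)) Filter.atTop (nhds 1) := by
    have := (Real.continuous_cos.tendsto 0).comp (tendsto_const_div_atTop_nhds_zero_nat (2 * Real.pi))
    rw [Real.cos_zero] at this
    exact this
  obtain ⟨N, hN⟩ := Filter.eventually_atTop.1 (hlim.eventually (lt_mem_nhds hlt))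
  refine ⟨N, fun n hn => ?_⟩
  have hcont : Continuous (fun t : ℝ => ((w.toWord.map (GLt t)).prod 0 0).re) :=
    Complex.continuous_re.comp ((cont_prod w.toWord).matrix_elem 0 0)
  obtain ⟨s, hs⟩ := mem_range_of_exists_le_of_exists_ge hcont ⟨t, (hN n hn).le⟩
    ⟨0, by rw [h0]; simpa using Real.cos_le_one _⟩
  have hl : Complex.exp (2 * Real.pi * Complex.I / n) = Complex.exp ((2 * Real.pi / n : ℝ) * Complex.I) := by
    congr 1; push_cast; ring
  obtain ⟨U, hU, hUd⟩ := conj_diag (FreeGroup.lift (g s) w) (by rw [hg]; exact hdet s)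
    (Complex.exp (2 * Real.pi * Complex.I / n)) (Complex.exp (-(2 * Real.pi * Complex.I) / n))
    (by rw [← Complex.exp_add, neg_div, add_neg_cancel, Complex.exp_zero])
    (by rw [RCLike.star_def, ← Complex.exp_conj]; simp [Complex.conj_ofNat])
    (by rw [hg, hl, Complex.exp_ofReal_mul_I_re]; exact hs)
  refine ⟨_, ⟨fun i => U⁻¹ * g s i * U, ?_, rfl⟩, ?_⟩
  · intro i
    have h1 : (U⁻¹ : Matrix.unitaryGroup (Fin 2) ℂ).1.det * U.1.det = 1 := by
      rw [← Matrix.det_mul, ← Matrix.UnitaryGroup.mul_val, inv_mul_cancel]; simp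
    change (U⁻¹ * g s i * U).1.det = 1
    rw [Matrix.UnitaryGroup.mul_val, Matrix.UnitaryGroup.mul_val, Matrix.det_mul, Matrix.det_mul]
    have h2 : (g s i).1.det = 1 := GG_det _ _ _
    rw [h2, mul_one, h1]
  · rw [← hUd]
    congr 1
    have : FreeGroup.lift (fun i => U⁻¹ * g s i * U) = (MulAut.conj U⁻¹).toMonoidHom.comp (FreeGroup.lift (g s)) := by
      ext i
      simp
    rw [this]
    simp
end

section
/- For every pair of nontrivial words w₁ ∈ F_{d₁} and w₂ ∈ F_{d₂}, there exists a natural number N such that for every integer n ≥ N, every element of the compact symplectic group Sp(n) is a product g₁g₂ with g₁ ∈ w₁(Sp(n)) and g₂ ∈ w₂(Sp(n)); that is, Sp(n) = w₁(Sp(n))·w₂(Sp(n)). -/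
open scoped Matrix

/-- The standard symplectic form `J = [[0, I_n], [-I_n, 0]]`. -/
def sympJ (n : ℕ) : Matrix (Fin n ⊕ Fin n) (Fin n ⊕ Fin n) ℂ :=
  Matrix.fromBlocks 0 1 (-1) 0

/-- The compact symplectic group `Sp(n) = U(2n) ∩ Sp(2n, ℂ)`, as the subset of the
unitary group of `2n × 2n` complex matrices `M` satisfying `Mᵀ J M = J`. -/
def CompactSp (n : ℕ) : Set (Matrix.unitaryGroup (Fin n ⊕ Fin n) ℂ) :=
  {M | (M : Matrix (Fin n ⊕ Fin n) (Fin n ⊕ Fin n) ℂ)ᵀ * sympJ n *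
        (M : Matrix (Fin n ⊕ Fin n) (Fin n ⊕ Fin n) ℂ) = sympJ n}


namespace SpW

open Matrix

/-- bilinear symplectic form -/
noncomputable def om {n : ℕ} (u v : Fin n ⊕ Fin n → ℂ) : ℂ := u ⬝ᵥ (sympJ n *ᵥ v)

/-- hermitian form -/
noncomputable def hm {n : ℕ} (u v : Fin n ⊕ Fin n → ℂ) : ℂ := star u ⬝ᵥ v

lemma om_eq {n : ℕ} (u v : Fin n ⊕ Fin n → ℂ) :
    om u v = ∑ k, (u (Sum.inl k) * v (Sum.inr k) - u (Sum.inr k) * v (Sum.inl k)) := by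
  unfold om sympJ
  simp [Matrix.fromBlocks_mulVec, dotProduct, Matrix.neg_mulVec, Fintype.sum_sum_type,
    sub_eq_add_neg, Finset.sum_add_distrib]

lemma hm_eq {n : ℕ} (u v : Fin n ⊕ Fin n → ℂ) :
    hm u v = ∑ p, star (u p) * v p := rfl

lemma om_swap {n : ℕ} (u v : Fin n ⊕ Fin n → ℂ) : om u v = - om v u := by
  rw [om_eq, om_eq, ← Finset.sum_neg_distrib]
  exact Finset.sum_congr rfl fun k _ => by ring

lemma om_self {n : ℕ} (u : Fin n ⊕ Fin n → ℂ) : om u u = 0 := by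
  rw [om_eq]; exact Finset.sum_eq_zero fun k _ => by ring

lemma om_smul_left {n : ℕ} (c : ℂ) (u v : Fin n ⊕ Fin n → ℂ) : om (c • u) v = c * om u v := by
  simp [om]

lemma om_smul_right {n : ℕ} (c : ℂ) (u v : Fin n ⊕ Fin n → ℂ) : om u (c • v) = c * om u v := by
  simp [om, mulVec_smul]

lemma hm_smul_left {n : ℕ} (c : ℂ) (u v : Fin n ⊕ Fin n → ℂ) :
    hm (c • u) v = star c * hm u v := by
  simp [hm]

lemma hm_smul_right {n : ℕ} (c : ℂ) (u v : Fin n ⊕ Fin n → ℂ) : hm u (c • v) = c * hm u v := by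
  simp [hm]

lemma hm_swap {n : ℕ} (u v : Fin n ⊕ Fin n → ℂ) : hm u v = star (hm v u) := by
  simp [hm_eq, mul_comm]

lemma om_mulVec {n : ℕ} (M : Matrix (Fin n ⊕ Fin n) (Fin n ⊕ Fin n) ℂ)
    (u v : Fin n ⊕ Fin n → ℂ) :
    om (M *ᵥ u) (M *ᵥ v) = u ⬝ᵥ ((Mᵀ * sympJ n * M) *ᵥ v) := by
  unfold om
  rw [← Matrix.mulVec_mulVec, ← Matrix.mulVec_mulVec, Matrix.dotProduct_mulVec u Mᵀ,
    Matrix.vecMul_transpose]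

lemma hm_mulVec {n : ℕ} (M : Matrix (Fin n ⊕ Fin n) (Fin n ⊕ Fin n) ℂ)
    (u v : Fin n ⊕ Fin n → ℂ) :
    hm (M *ᵥ u) (M *ᵥ v) = star u ⬝ᵥ ((star M * M) *ᵥ v) := by
  unfold hm
  rw [← Matrix.mulVec_mulVec, Matrix.dotProduct_mulVec (star u), Matrix.star_mulVec]
  rfl

lemma mem_of_om {n : ℕ} (M : Matrix.unitaryGroup (Fin n ⊕ Fin n) ℂ)
    (h : ∀ u v, om (M.1 *ᵥ u) (M.1 *ᵥ v) = om u v) :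
    M ∈ CompactSp n := by
  show _ = _
  simp only [om_mulVec] at h
  refine Matrix.ext_iff_mulVec.mpr ?_
  intro v
  refine dotProduct_eq _ _ fun u => ?_
  rw [dotProduct_comm, h u v, om, dotProduct_comm]

lemma om_of_mem {n : ℕ} {M : Matrix.unitaryGroup (Fin n ⊕ Fin n) ℂ} (h : M ∈ CompactSp n)
    (u v : Fin n ⊕ Fin n → ℂ) :
    om (M.1 *ᵥ u) (M.1 *ᵥ v) = om u v := by
  rw [om_mulVec]
  have h' : _ = _ := h
  rw [h', om]

lemma unit_of_hm {n : ℕ} (M : Matrix (Fin n ⊕ Fin n) (Fin n ⊕ Fin n) ℂ)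
    (h : ∀ u v, hm (M *ᵥ u) (M *ᵥ v) = hm u v) : M ∈ Matrix.unitaryGroup (Fin n ⊕ Fin n) ℂ := by
  rw [Matrix.mem_unitaryGroup_iff']
  simp only [hm_mulVec] at h
  refine Matrix.ext_iff_mulVec.mpr ?_
  intro v
  refine dotProduct_eq _ _ fun u => ?_
  have := h (star u) v
  rw [star_star] at this
  rw [dotProduct_comm, this, hm, star_star, dotProduct_comm, one_mulVec]

lemma hm_of_unit {n : ℕ} (M : Matrix.unitaryGroup (Fin n ⊕ Fin n) ℂ)
    (u v : Fin n ⊕ Fin n → ℂ) :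
    hm (M.1 *ᵥ u) (M.1 *ᵥ v) = hm u v := by
  rw [hm_mulVec, Matrix.mem_unitaryGroup_iff'.mp M.2, one_mulVec, hm]

/-- CompactSp as a subgroup -/
def SpG (n : ℕ) : Subgroup (Matrix.unitaryGroup (Fin n ⊕ Fin n) ℂ) where
  carrier := CompactSp n
  mul_mem' {a b} ha hb := by
    refine mem_of_om _ fun u v => ?_
    rw [Matrix.UnitaryGroup.mul_val, ← mulVec_mulVec, ← mulVec_mulVec, om_of_mem ha, om_of_mem hb]
  one_mem' := mem_of_om _ fun u v => by simp
  inv_mem' {a} ha := by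
    refine mem_of_om _ fun u v => ?_
    rw [← om_of_mem ha, mulVec_mulVec, mulVec_mulVec, ← Matrix.UnitaryGroup.mul_val]
    simp

lemma mem_SpG {n : ℕ} {M : Matrix.unitaryGroup (Fin n ⊕ Fin n) ℂ} :
    M ∈ SpG n ↔ M ∈ CompactSp n := Iff.rfl

lemma word_map {d : ℕ} {G H : Type*} [Group G] [Group H] (φ : G →* H) (w : FreeGroup (Fin d))
    (S : Set G) (T : Set H) (hST : ∀ s ∈ S, φ s ∈ T) {x : G} (hx : x ∈ wordValuesIn w S) :
    φ x ∈ wordValuesIn w T := by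
  obtain ⟨g, hg, rfl⟩ := hx
  refine ⟨fun i => φ (g i), fun i => hST _ (hg i), ?_⟩
  have : FreeGroup.lift (fun i => φ (g i)) = φ.comp (FreeGroup.lift g) := by
    ext i; simp
  rw [this]; rfl

lemma word_conj {d n : ℕ} (w : FreeGroup (Fin d)) {x P : Matrix.unitaryGroup (Fin n ⊕ Fin n) ℂ}
    (hP : P ∈ CompactSp n) (hx : x ∈ wordValuesIn w (CompactSp n)) :
    P * x * P⁻¹ ∈ wordValuesIn w (CompactSp n) := by
  have := word_map (MulAut.conj P).toMonoidHom w (CompactSp n) (CompactSp n) (fun s hs => by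
    simp only [MulEquiv.coe_toMonoidHom, MulAut.conj_apply]
    exact (SpG n).mul_mem ((SpG n).mul_mem hP hs) ((SpG n).inv_mem hP)) hx
  simpa using this

/-- diagonal matrix with entries `μ` and `star μ`. -/
noncomputable def dg {n : ℕ} (μ : Fin n → ℂ) : Matrix (Fin n ⊕ Fin n) (Fin n ⊕ Fin n) ℂ :=
  Matrix.diagonal (Sum.elim μ (fun k => star (μ k)))

lemma dg_mulVec_inl {n : ℕ} (μ : Fin n → ℂ) (u : Fin n ⊕ Fin n → ℂ) (k : Fin n) :
    (dg μ *ᵥ u) (Sum.inl k) = μ k * u (Sum.inl k) := by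
  simp [dg, Matrix.mulVec_diagonal]

lemma dg_mulVec_inr {n : ℕ} (μ : Fin n → ℂ) (u : Fin n ⊕ Fin n → ℂ) (k : Fin n) :
    (dg μ *ᵥ u) (Sum.inr k) = star (μ k) * u (Sum.inr k) := by
  simp [dg, Matrix.mulVec_diagonal]

lemma dg_unit {n : ℕ} (μ : Fin n → ℂ) (hμ : ∀ k, star (μ k) * μ k = 1) :
    dg μ ∈ Matrix.unitaryGroup (Fin n ⊕ Fin n) ℂ := by
  refine unit_of_hm _ fun u v => ?_
  rw [hm_eq, hm_eq]
  refine Finset.sum_congr rfl fun p _ => ?_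
  rcases p with k | k
  · rw [dg_mulVec_inl, dg_mulVec_inl, star_mul']
    linear_combination (star (u (Sum.inl k)) * v (Sum.inl k)) * hμ k
  · rw [dg_mulVec_inr, dg_mulVec_inr, star_mul', star_star]
    linear_combination (star (u (Sum.inr k)) * v (Sum.inr k)) * hμ k

/-- diagonal element -/
noncomputable def dgU {n : ℕ} (μ : Fin n → ℂ) (hμ : ∀ k, star (μ k) * μ k = 1) :
    Matrix.unitaryGroup (Fin n ⊕ Fin n) ℂ := ⟨dg μ, dg_unit μ hμ⟩

lemma dgU_mem {n : ℕ} (μ : Fin n → ℂ) (hμ : ∀ k, star (μ k) * μ k = 1) :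
    dgU μ hμ ∈ CompactSp n := by
  refine mem_of_om _ fun u v => ?_
  rw [om_eq, om_eq]
  refine Finset.sum_congr rfl fun k _ => ?_
  show (dg μ *ᵥ u) _ * (dg μ *ᵥ v) _ - (dg μ *ᵥ u) _ * (dg μ *ᵥ v) _ = _
  rw [dg_mulVec_inl, dg_mulVec_inl, dg_mulVec_inr, dg_mulVec_inr]
  linear_combination (u (Sum.inl k) * v (Sum.inr k) - u (Sum.inr k) * v (Sum.inl k)) * hμ k

/-- quaternionic structure -/
noncomputable def sg {n : ℕ} (v : Fin n ⊕ Fin n → ℂ) : Fin n ⊕ Fin n → ℂ :=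
  Sum.elim (fun k => - star (v (Sum.inr k))) (fun k => star (v (Sum.inl k)))

lemma hm_sg {n : ℕ} (u v : Fin n ⊕ Fin n → ℂ) : hm (sg u) v = om u v := by
  rw [om_eq, hm_eq, Fintype.sum_sum_type, ← Finset.sum_add_distrib]
  refine Finset.sum_congr rfl fun k _ => ?_
  simp [sg]; ring

lemma om_sg {n : ℕ} (u v : Fin n ⊕ Fin n → ℂ) : om u (sg v) = hm v u := by
  rw [om_eq, hm_eq, Fintype.sum_sum_type, ← Finset.sum_add_distrib]
  refine Finset.sum_congr rfl fun k _ => ?_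
  simp [sg]; ring

lemma hm_ext {n : ℕ} {u v : Fin n ⊕ Fin n → ℂ} (h : ∀ w, hm u w = hm v w) : u = v := by
  have : star u = star v := dotProduct_eq _ _ h
  exact star_injective this

lemma sg_mulVec {n : ℕ} {x : Matrix.unitaryGroup (Fin n ⊕ Fin n) ℂ} (hx : x ∈ CompactSp n)
    (v : Fin n ⊕ Fin n → ℂ) : x.1 *ᵥ sg v = sg (x.1 *ᵥ v) := by
  refine hm_ext fun w => ?_
  have : w = x.1 *ᵥ ((x⁻¹).1 *ᵥ w) := by
    rw [mulVec_mulVec, ← Matrix.UnitaryGroup.mul_val]; simp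
  rw [this, hm_of_unit, hm_sg, hm_sg, om_of_mem hx]

lemma sg_smul {n : ℕ} (c : ℂ) (v : Fin n ⊕ Fin n → ℂ) : sg (c • v) = star c • sg v := by
  funext p
  rcases p with k | k <;> simp [sg]

lemma exists_frame {n : ℕ} {x : Matrix.unitaryGroup (Fin n ⊕ Fin n) ℂ} (hx : x ∈ CompactSp n)
    (v : Fin n → Fin n ⊕ Fin n → ℂ) (μ : Fin n → ℂ) (hμ : ∀ k, star (μ k) * μ k = 1)
    (hv : ∀ i, x.1 *ᵥ v i = μ i • v i)
    (ho : ∀ i j, hm (v i) (v j) = if i = j then 1 else 0) (hw : ∀ i j, om (v i) (v j) = 0) :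
    ∃ P ∈ CompactSp n, x = P * dgU μ hμ * P⁻¹ := by
  set c : Fin n ⊕ Fin n → Fin n ⊕ Fin n → ℂ := Sum.elim v (fun k => sg (v k)) with hc
  set P : Matrix (Fin n ⊕ Fin n) (Fin n ⊕ Fin n) ℂ := Matrix.of fun p q => c q p with hP
  have hcol : ∀ q, P *ᵥ Pi.single q 1 = c q := by
    intro q; rw [Matrix.mulVec_single_one]; rfl
  have hPu : P ∈ Matrix.unitaryGroup (Fin n ⊕ Fin n) ℂ := by
    rw [Matrix.mem_unitaryGroup_iff']
    ext p q
    have : (star P * P) p q = hm (c p) (c q) := rfl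
    rw [this, Matrix.one_apply]
    rcases p with i | i <;> rcases q with j | j
    · simp [hc, ho]
    · simp only [hc, Sum.elim_inl, Sum.elim_inr, reduceCtorEq, if_false]
      rw [hm_swap, hm_sg, hw, star_zero]
    · simp [hc, hm_sg, hw]
    · simp only [hc, Sum.elim_inr, Sum.inr.injEq]
      rw [hm_sg, om_sg, ho]
      simp [eq_comm]
  have hPs : (⟨P, hPu⟩ : Matrix.unitaryGroup (Fin n ⊕ Fin n) ℂ) ∈ CompactSp n := by
    show Pᵀ * sympJ n * P = sympJ n
    ext p q
    have : (Pᵀ * sympJ n * P) p q = om (c p) (c q) := by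
      rw [← hcol, ← hcol, om_mulVec]
      simp
    rw [this]
    rcases p with i | i <;> rcases q with j | j
    · simp [hc, hw, sympJ]
    · simp [hc, om_sg, ho, sympJ, Matrix.one_apply, eq_comm]
    · simp only [hc, Sum.elim_inl, Sum.elim_inr, sympJ, Matrix.fromBlocks_apply₂₁]
      rw [om_swap, om_sg, ho]
      simp [Matrix.one_apply]
    · simp only [hc, Sum.elim_inr, sympJ, Matrix.fromBlocks_apply₂₂]
      rw [om_sg, hm_swap, hm_sg, hw]; simp
  refine ⟨⟨P, hPu⟩, hPs, ?_⟩
  rw [eq_mul_inv_iff_mul_eq]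
  apply Subtype.ext
  show x.1 * P = P * dg μ
  refine Matrix.ext_of_mulVec_single fun q => ?_
  rw [← mulVec_mulVec, ← mulVec_mulVec, hcol]
  have hd : dg μ *ᵥ Pi.single q 1 = (Sum.elim μ (fun k => star (μ k)) q) • Pi.single q 1 := by
    simp only [dg, Matrix.diagonal_mulVec_single, mul_one]
    rw [← Pi.single_smul]; simp
  rw [hd, mulVec_smul, hcol]
  rcases q with i | i
  · simp [hc, hv]
  · simp only [hc, Sum.elim_inr]
    rw [sg_mulVec hx, hv, sg_smul]

lemma exists_normalize {n : ℕ} (u : Fin n ⊕ Fin n → ℂ) (hu : u ≠ 0) :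
    ∃ c : ℂ, hm (c • u) (c • u) = 1 := by
  have h1 : hm u u = ((∑ p, ‖u p‖ ^ 2 : ℝ) : ℂ) := by
    rw [hm_eq]; push_cast
    refine Finset.sum_congr rfl fun p _ => ?_
    rw [← Complex.conj_mul']; rfl
  have h2 : 0 < ∑ p, ‖u p‖ ^ 2 := by
    obtain ⟨p, hp⟩ := Function.ne_iff.mp hu
    refine Finset.sum_pos' (fun _ _ => by positivity) ⟨p, Finset.mem_univ _, ?_⟩
    have : 0 < ‖u p‖ := norm_pos_iff.mpr hp
    positivity
  set r := ∑ p, ‖u p‖ ^ 2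
  refine ⟨(((Real.sqrt r)⁻¹ : ℝ) : ℂ), ?_⟩
  rw [hm_smul_left, hm_smul_right, h1]
  have h3 : (Real.sqrt r)⁻¹ * ((Real.sqrt r)⁻¹ * r) = 1 := by
    have := Real.mul_self_sqrt h2.le
    have h4 : Real.sqrt r ≠ 0 := (Real.sqrt_pos.mpr h2).ne'
    field_simp
    nlinarith
  have : star (((Real.sqrt r)⁻¹ : ℝ) : ℂ) = (((Real.sqrt r)⁻¹ : ℝ) : ℂ) := Complex.conj_ofReal _
  rw [this]
  exact_mod_cast h3

lemma eig_unit {n : ℕ} (x : Matrix.unitaryGroup (Fin n ⊕ Fin n) ℂ) (u : Fin n ⊕ Fin n → ℂ)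
    (μ : ℂ) (hu : hm u u = 1) (h : x.1 *ᵥ u = μ • u) : star μ * μ = 1 := by
  have := hm_of_unit x u u
  rw [h, hm_smul_left, hm_smul_right, hu] at this
  simpa using this

lemma hm_eig {n : ℕ} (x : Matrix.unitaryGroup (Fin n ⊕ Fin n) ℂ) (u v : Fin n ⊕ Fin n → ℂ)
    (μ : ℂ) (h : x.1 *ᵥ u = μ • u) : star μ * hm u (x.1 *ᵥ v) = hm u v := by
  rw [← hm_smul_left, ← h, hm_of_unit]

lemma om_eig {n : ℕ} {x : Matrix.unitaryGroup (Fin n ⊕ Fin n) ℂ} (hx : x ∈ CompactSp n)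
    (u v : Fin n ⊕ Fin n → ℂ)
    (μ : ℂ) (h : x.1 *ᵥ u = μ • u) : μ * om u (x.1 *ᵥ v) = om u v := by
  rw [← om_smul_left, ← h, om_of_mem hx]

/-- distinct spectrum -/
lemma conj_of_eig {n : ℕ} {x : Matrix.unitaryGroup (Fin n ⊕ Fin n) ℂ} (hx : x ∈ CompactSp n)
    (μ : Fin n → ℂ) (hμ : ∀ k, star (μ k) * μ k = 1)
    (h1 : ∀ i j, i ≠ j → star (μ i) * μ j ≠ 1) (h2 : ∀ i j, μ i * μ j ≠ 1)
    (he : ∀ i, ∃ v, v ≠ 0 ∧ x.1 *ᵥ v = μ i • v) :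
    ∃ P ∈ CompactSp n, x = P * dgU μ hμ * P⁻¹ := by
  have he' : ∀ i, ∃ v, hm v v = 1 ∧ x.1 *ᵥ v = μ i • v := by
    intro i
    obtain ⟨v, hv, h⟩ := he i
    obtain ⟨c, hc⟩ := exists_normalize v hv
    exact ⟨c • v, hc, by rw [mulVec_smul, h, smul_comm]⟩
  choose v hv1 hv2 using he'
  refine exists_frame hx v μ hμ hv2 ?_ ?_
  · intro i j
    split_ifs with hij
    · subst hij; exact hv1 i
    · have := hm_eig x (v i) (v j) (μ i) (hv2 i)
      rw [hv2 j, hm_smul_right, ← mul_assoc] at this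
      have h3 : (star (μ i) * μ j - 1) * hm (v i) (v j) = 0 := by rw [sub_mul, this]; ring
      rcases mul_eq_zero.mp h3 with h | h
      · exact absurd (sub_eq_zero.mp h) (h1 i j hij)
      · exact h
  · intro i j
    have := om_eig hx (v i) (v j) (μ i) (hv2 i)
    rw [hv2 j, om_smul_right, ← mul_assoc] at this
    have h3 : (μ i * μ j - 1) * om (v i) (v j) = 0 := by rw [sub_mul, this]; ring
    rcases mul_eq_zero.mp h3 with h | h
    · exact absurd (sub_eq_zero.mp h) (h2 i j)
    · exact h

lemma partial_frame {n : ℕ} {x : Matrix.unitaryGroup (Fin n ⊕ Fin n) ℂ} (hx : x ∈ CompactSp n)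
    (k : ℕ) (hk : k ≤ n) :
    ∃ (v : Fin k → Fin n ⊕ Fin n → ℂ) (μ : Fin k → ℂ), (∀ i, x.1 *ᵥ v i = μ i • v i) ∧
      (∀ i j, hm (v i) (v j) = if i = j then 1 else 0) ∧ (∀ i j, om (v i) (v j) = 0) := by
  induction k with
  | zero => exact ⟨Fin.elim0, Fin.elim0, fun i => i.elim0, fun i => i.elim0, fun i => i.elim0⟩
  | succ k ih =>
    obtain ⟨v, μ, hv, ho, hw⟩ := ih (by omega)
    have hμ : ∀ i, star (μ i) * μ i = 1 := fun i =>
      eig_unit x (v i) (μ i) (by simp [ho]) (hv i)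
    let f : (Fin n ⊕ Fin n → ℂ) →ₗ[ℂ] (Fin k ⊕ Fin k → ℂ) :=
      { toFun := fun u => Sum.elim (fun i => hm (v i) u) (fun i => om (v i) u)
        map_add' := fun a b => by
          funext p
          rcases p with i | i <;> simp [hm, om, mulVec_add]
        map_smul' := fun c a => by
          funext p
          rcases p with i | i <;> simp [hm_smul_right, om_smul_right] }
    have hf : ∀ u, u ∈ LinearMap.ker f ↔ ∀ i, hm (v i) u = 0 ∧ om (v i) u = 0 := by
      intro u
      rw [LinearMap.mem_ker]
      constructor
      · intro h i
        exact ⟨congrFun h (Sum.inl i), congrFun h (Sum.inr i)⟩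
      · intro h
        funext p
        rcases p with i | i
        · exact (h i).1
        · exact (h i).2
    have hpos : 0 < Module.finrank ℂ (LinearMap.ker f) := by
      have h1 := LinearMap.finrank_range_add_finrank_ker f
      have h2 := Submodule.finrank_le (LinearMap.range f)
      simp at h1 h2
      omega
    have : Nontrivial (LinearMap.ker f) := Module.finrank_pos_iff.mp hpos
    have hinv : ∀ u ∈ LinearMap.ker f, Matrix.mulVecLin x.1 u ∈ LinearMap.ker f := by
      intro u hu
      rw [hf] at hu ⊢
      intro i
      have h0 : μ i ≠ 0 := fun h => by simpa [h] using hμ i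
      have h0' : star (μ i) ≠ 0 := fun h => by simpa [h] using hμ i
      rw [Matrix.mulVecLin_apply]
      constructor
      · have := hm_eig x (v i) u (μ i) (hv i)
        rw [(hu i).1] at this
        exact (mul_eq_zero.mp this).resolve_left h0'
      · have := om_eig hx (v i) u (μ i) (hv i)
        rw [(hu i).2] at this
        exact (mul_eq_zero.mp this).resolve_left h0
    obtain ⟨c, hc⟩ := Module.End.exists_eigenvalue ((Matrix.mulVecLin x.1).restrict hinv)
    obtain ⟨u, hu⟩ := hc.exists_hasEigenvector
    have hu1 : x.1 *ᵥ u.1 = c • u.1 := congrArg Subtype.val hu.apply_eq_smul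
    have hu0 : u.1 ≠ 0 := fun h => hu.2 (Subtype.ext h)
    obtain ⟨s, hs⟩ := exists_normalize u.1 hu0
    have hk := (hf _).mp ((LinearMap.ker f).smul_mem s u.2)
    set y := s • u.1 with hy
    have hy1 : x.1 *ᵥ y = c • y := by rw [hy, mulVec_smul, hu1, smul_comm]
    refine ⟨Fin.cons y v, Fin.cons c μ, ?_, ?_, ?_⟩
    · intro i
      refine Fin.cases ?_ (fun i => ?_) i
      · simpa using hy1
      · simpa using hv i
    · intro i j
      refine Fin.cases ?_ (fun i => ?_) i <;> refine Fin.cases ?_ (fun j => ?_) j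
      · simpa using hs
      · rw [if_neg (Fin.succ_ne_zero j).symm, hm_swap]
        simp [(hk j).1]
      · rw [if_neg (Fin.succ_ne_zero i)]
        simp [(hk i).1]
      · simp [ho]
    · intro i j
      refine Fin.cases ?_ (fun i => ?_) i <;> refine Fin.cases ?_ (fun j => ?_) j
      · simp [om_self]
      · rw [om_swap]
        simp [(hk j).2]
      · simp [(hk i).2]
      · simp [hw]

lemma spectral {n : ℕ} {x : Matrix.unitaryGroup (Fin n ⊕ Fin n) ℂ} (hx : x ∈ CompactSp n) :
    ∃ (μ : Fin n → ℂ) (hμ : ∀ k, star (μ k) * μ k = 1),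
      ∃ P ∈ CompactSp n, x = P * dgU μ hμ * P⁻¹ := by
  obtain ⟨v, μ, hv, ho, hw⟩ := partial_frame hx n le_rfl
  have hμ : ∀ i, star (μ i) * μ i = 1 := fun i =>
    eig_unit x (v i) (μ i) (by simp [ho]) (hv i)
  exact ⟨μ, hμ, exists_frame hx v μ hμ hv ho hw⟩

/-- index map of the signed cycle -/
def cyT {m : ℕ} : Fin (m + 1) ⊕ Fin (m + 1) → Fin (m + 1) ⊕ Fin (m + 1)
  | Sum.inl k => if k = 0 then Sum.inr (k - 1) else Sum.inl (k - 1)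
  | Sum.inr k => if k = 0 then Sum.inl (k - 1) else Sum.inr (k - 1)

/-- signs of the signed cycle -/
noncomputable def cyE {m : ℕ} : Fin (m + 1) ⊕ Fin (m + 1) → ℂ
  | Sum.inl _ => 1
  | Sum.inr k => if k = 0 then -1 else 1

/-- the signed cycle -/
noncomputable def cy (m : ℕ) : Matrix (Fin (m + 1) ⊕ Fin (m + 1)) (Fin (m + 1) ⊕ Fin (m + 1)) ℂ :=
  Matrix.of fun p q => if q = cyT p then cyE p else 0

lemma cy_mulVec {m : ℕ} (u : Fin (m + 1) ⊕ Fin (m + 1) → ℂ) (p) :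
    (cy m *ᵥ u) p = cyE p * u (cyT p) := by
  simp [cy, mulVec, dotProduct, ite_mul]

lemma cy_unit (m : ℕ) : cy m ∈ Matrix.unitaryGroup (Fin (m + 1) ⊕ Fin (m + 1)) ℂ := by
  refine unit_of_hm _ fun u v => ?_
  rw [hm_eq, hm_eq, Fintype.sum_sum_type, Fintype.sum_sum_type, ← Finset.sum_add_distrib,
    ← Finset.sum_add_distrib]
  conv_rhs => rw [← Equiv.sum_comp (Equiv.subRight (1 : Fin (m + 1)))]
  refine Finset.sum_congr rfl fun k _ => ?_
  simp only [cy_mulVec, cyE, cyT, Equiv.subRight_apply]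
  split_ifs <;> simp <;> ring

/-- the signed cycle -/
noncomputable def cyU (m : ℕ) : Matrix.unitaryGroup (Fin (m + 1) ⊕ Fin (m + 1)) ℂ :=
  ⟨cy m, cy_unit m⟩

lemma cyU_mem (m : ℕ) : cyU m ∈ CompactSp (m + 1) := by
  refine mem_of_om _ fun u v => ?_
  show om (cy m *ᵥ u) (cy m *ᵥ v) = _
  rw [om_eq, om_eq]
  conv_rhs => rw [← Equiv.sum_comp (Equiv.subRight (1 : Fin (m + 1)))]
  refine Finset.sum_congr rfl fun k _ => ?_
  simp only [cy_mulVec, cyE, cyT, Equiv.subRight_apply]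
  split_ifs <;> simp <;> ring

lemma exists_partial_prod {m : ℕ} (μ : Fin (m + 1) → ℂ) (hμ : ∀ k, star (μ k) * μ k = 1) :
    ∃ M : Fin (m + 1) → ℂ, M 0 = μ 0 ∧ (∀ j : Fin m, M j.succ = μ j.succ * M j.castSucc) ∧
      ∀ k, star (M k) * M k = 1 := by
  let M : Fin (m + 1) → ℂ := Fin.induction (μ 0) (fun j c => μ j.succ * c)
  have h0 : M 0 = μ 0 := rfl
  have h1 : ∀ j : Fin m, M j.succ = μ j.succ * M j.castSucc := fun j => by
    simp only [M, Fin.induction_succ]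
  refine ⟨M, h0, h1, ?_⟩
  intro k
  induction k using Fin.induction with
  | zero => rw [h0]; exact hμ 0
  | succ j ih =>
    rw [h1, star_mul']
    linear_combination (star (M j.castSucc) * M j.castSucc) * hμ j.succ + ih

lemma cy_eig {m : ℕ} (μ : Fin (m + 1) → ℂ) (hμ : ∀ k, star (μ k) * μ k = 1) (l : ℂ)
    (hl : l ^ (2 * (m + 1)) = -1) :
    ∃ u, u ≠ 0 ∧ dg μ *ᵥ u = l • (cy m *ᵥ u) := by
  obtain ⟨M, h0, h1, hM⟩ := exists_partial_prod μ hμ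
  have hl0 : l ≠ 0 := by rintro rfl; simp at hl
  have hs : ∀ j : Fin m, j.succ - 1 = j.castSucc := fun j => by
    rw [← Fin.coeSucc_eq_succ, add_sub_cancel_right]
  have hz : (0 : Fin (m + 1)) - 1 = Fin.last m := by
    rw [← Fin.last_add_one, add_sub_cancel_right]
  let u : Fin (m + 1) ⊕ Fin (m + 1) → ℂ := Sum.elim (fun k => l ^ (k : ℕ) * star (M k))
    (fun k => l ^ (k : ℕ) * M k * (- l ^ (m + 1) * star (M (Fin.last m))))
  refine ⟨u, ?_, ?_⟩
  · intro h
    have := congrFun h (Sum.inl 0)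
    have h2 := hM 0
    simp only [u, Sum.elim_inl, Pi.zero_apply, mul_eq_zero] at this
    rcases this with h3 | h3
    · simp at h3
    · rw [h3] at h2; simp at h2
  · funext p
    rw [Pi.smul_apply, cy_mulVec, smul_eq_mul]
    rcases p with k | k
    · rw [dg_mulVec_inl]
      induction k using Fin.cases with
      | zero =>
        simp only [cyT, cyE, if_true, hz, u, Sum.elim_inl, Sum.elim_inr, h0, Fin.val_zero,
          Fin.val_last]
        have := hM (Fin.last m)
        have h3 := hμ 0
        linear_combination h3 + l ^ (2 * (m + 1)) * this + hl
      | succ j =>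
        simp only [cyT, cyE, Fin.succ_ne_zero, if_false, hs, u, Sum.elim_inl, h1, Fin.val_succ,
          Fin.val_castSucc, star_mul']
        linear_combination (l ^ (j.val + 1) * star (M j.castSucc)) * hμ j.succ
    · rw [dg_mulVec_inr]
      induction k using Fin.cases with
      | zero =>
        simp only [cyT, cyE, if_true, hz, u, Sum.elim_inl, Sum.elim_inr, h0, Fin.val_zero,
          Fin.val_last]
        have h3 := hμ 0
        linear_combination (-l ^ (m + 1) * star (M (Fin.last m))) * h3
      | succ j =>
        simp only [cyT, cyE, Fin.succ_ne_zero, if_false, hs, u, Sum.elim_inr, h1, Fin.val_succ,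
          Fin.val_castSucc]
        linear_combination (l ^ (j.val + 1) * M j.castSucc *
          (-l ^ (m + 1) * star (M (Fin.last m)))) * hμ j.succ

/-- the eigenvalues -/
noncomputable def ev (n : ℕ) (k : ℕ) : ℂ :=
  Complex.exp ((((2 * k + 1 : ℝ) * (Real.pi / (2 * n)) : ℝ) : ℂ) * Complex.I)

lemma exp_unit (a : ℝ) : star (Complex.exp ((a : ℂ) * Complex.I)) * Complex.exp ((a : ℂ) * Complex.I)
    = 1 := by
  have : star (Complex.exp ((a : ℂ) * Complex.I)) = Complex.exp (-((a : ℂ) * Complex.I)) := by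
    rw [Complex.star_def, ← Complex.exp_conj]; simp
  rw [this, ← Complex.exp_add]; simp

lemma exp_ne_one (a : ℝ) (h0 : a ≠ 0) (h1 : |a| < 2 * Real.pi) :
    Complex.exp ((a : ℂ) * Complex.I) ≠ 1 := by
  intro h
  rw [Complex.exp_eq_one_iff] at h
  obtain ⟨k, hk⟩ := h
  have h2 : (a : ℂ) = ((k * (2 * Real.pi) : ℝ) : ℂ) := by
    have : ((a : ℂ) - k * (2 * Real.pi)) * Complex.I = 0 := by rw [sub_mul, hk]; ring
    rcases mul_eq_zero.mp this with h | h
    · push_cast; exact sub_eq_zero.mp h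
    · exact absurd h Complex.I_ne_zero
  have h3 : a = k * (2 * Real.pi) := by exact_mod_cast h2
  have hp := Real.pi_pos
  have hk0 : k ≠ 0 := by rintro rfl; simp at h3; exact h0 h3
  have : (1 : ℝ) ≤ |(k : ℝ)| := by exact_mod_cast Int.one_le_abs hk0
  rw [h3, abs_mul, abs_of_pos (by positivity : 0 < 2 * Real.pi)] at h1
  nlinarith

lemma ev_unit (n k : ℕ) : star (ev n k) * ev n k = 1 := exp_unit _

lemma ev_pow {n : ℕ} (hn : 0 < n) (k : ℕ) : ev n k ^ (2 * n) = -1 := by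
  unfold ev
  rw [← Complex.exp_nat_mul]
  have hn' : (n : ℂ) ≠ 0 := by exact_mod_cast hn.ne'
  have : ((2 * n : ℕ) : ℂ) * ((((2 * k + 1 : ℝ) * (Real.pi / (2 * n)) : ℝ) : ℂ) * Complex.I)
      = Real.pi * Complex.I + k * (2 * Real.pi * Complex.I) := by
    push_cast; field_simp; ring
  rw [this, Complex.exp_add, Complex.exp_pi_mul_I, Complex.exp_nat_mul_two_pi_mul_I]; ring

lemma ev_h1 {n : ℕ} (i j : Fin n) (hij : i ≠ j) : star (ev n i) * ev n j ≠ 1 := by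
  have hn : (0 : ℝ) < n := by exact_mod_cast (Nat.zero_le _).trans_lt i.2
  have h : star (ev n i) * ev n j =
      Complex.exp (((((j : ℝ) - i) * Real.pi / n : ℝ) : ℂ) * Complex.I) := by
    have h2 := ev_unit n i
    have h3 : ev n j = ev n i *
        Complex.exp (((((j : ℝ) - i) * Real.pi / n : ℝ) : ℂ) * Complex.I) := by
      unfold ev
      rw [← Complex.exp_add]
      congr 1
      have hn' : (n : ℂ) ≠ 0 := by exact_mod_cast hn.ne'
      push_cast; field_simp; ring
    rw [h3, ← mul_assoc, h2, one_mul]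
  rw [h]
  have hi : (i : ℝ) < n := by exact_mod_cast i.2
  have hj : (j : ℝ) < n := by exact_mod_cast j.2
  have hi0 : (0 : ℝ) ≤ i := by positivity
  have hj0 : (0 : ℝ) ≤ j := by positivity
  have hp := Real.pi_pos
  apply exp_ne_one
  · have : (j : ℝ) - i ≠ 0 := by
      intro h; apply hij; apply Fin.ext
      have : (j : ℝ) = i := by linarith
      exact_mod_cast this.symm
    positivity
  · rw [abs_div, abs_mul, abs_of_pos hp, abs_of_pos hn, div_lt_iff₀ hn]
    have : |(j : ℝ) - i| < n := by rw [abs_lt]; constructor <;> linarith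
    nlinarith

lemma ev_h2 {n : ℕ} (i j : Fin n) : ev n i * ev n j ≠ 1 := by
  have hn : (0 : ℝ) < n := by exact_mod_cast (Nat.zero_le _).trans_lt i.2
  have h : ev n i * ev n j =
      Complex.exp (((((i : ℝ) + j + 1) * Real.pi / n : ℝ) : ℂ) * Complex.I) := by
    unfold ev
    rw [← Complex.exp_add]
    congr 1
    have hn' : (n : ℂ) ≠ 0 := by exact_mod_cast hn.ne'
    push_cast; field_simp; ring
  rw [h]
  have hi : (i : ℝ) + 1 ≤ n := by exact_mod_cast i.2
  have hj : (j : ℝ) + 1 ≤ n := by exact_mod_cast j.2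
  have hp := Real.pi_pos
  apply exp_ne_one
  · positivity
  · rw [abs_of_pos (by positivity), div_lt_iff₀ hn]
    nlinarith

/-- principal class -/
lemma factor {n : ℕ} (hn : 0 < n) {x : Matrix.unitaryGroup (Fin n ⊕ Fin n) ℂ}
    (hx : x ∈ CompactSp n) :
    ∃ P ∈ CompactSp n, ∃ Q ∈ CompactSp n,
      x = (P * dgU (fun k : Fin n => ev n k) (fun k => ev_unit n k) * P⁻¹) *
        (Q * dgU (fun k : Fin n => ev n k) (fun k => ev_unit n k) * Q⁻¹) := by
  obtain ⟨m, rfl⟩ : ∃ m, n = m + 1 := ⟨n - 1, by omega⟩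
  obtain ⟨μ, hμ, R, hR, rfl⟩ := spectral hx
  have hcinv : ∀ u, ((cyU m)⁻¹).1 *ᵥ (cy m *ᵥ u) = u := fun u => by
    have : ((cyU m)⁻¹ * cyU m).1 *ᵥ u = u := by simp
    rwa [Matrix.UnitaryGroup.mul_val, ← mulVec_mulVec] at this
  have hg2 : (cyU m)⁻¹ * dgU μ hμ ∈ CompactSp (m + 1) :=
    (SpG (m + 1)).mul_mem ((SpG (m + 1)).inv_mem (cyU_mem m)) (dgU_mem μ hμ)
  obtain ⟨P, hP, hP'⟩ := conj_of_eig (cyU_mem m) (fun k => ev (m + 1) k)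
    (fun k => ev_unit (m + 1) k) ev_h1 ev_h2 (fun i => by
      obtain ⟨u, hu, h⟩ := cy_eig (m := m) (fun _ => 1) (by simp) (star (ev (m + 1) i))
        (by rw [← star_pow, ev_pow hn]; simp)
      refine ⟨u, hu, ?_⟩
      have h1 : dg (fun _ : Fin (m + 1) => (1 : ℂ)) *ᵥ u = u := by
        funext p
        rcases p with k | k
        · rw [dg_mulVec_inl]; simp
        · rw [dg_mulVec_inr]; simp
      rw [h1] at h
      show cy m *ᵥ u = _
      conv_rhs => rw [h]
      rw [smul_smul, mul_comm, ev_unit, one_smul])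
  obtain ⟨Q, hQ, hQ'⟩ := conj_of_eig hg2 (fun k => ev (m + 1) k)
    (fun k => ev_unit (m + 1) k) ev_h1 ev_h2 (fun i => by
      obtain ⟨u, hu, h⟩ := cy_eig μ hμ (ev (m + 1) i) (ev_pow hn i)
      refine ⟨u, hu, ?_⟩
      rw [Matrix.UnitaryGroup.mul_val, ← mulVec_mulVec]
      show _ *ᵥ (dg μ *ᵥ u) = _
      rw [h, mulVec_smul, hcinv])
  refine ⟨R * P, (SpG _).mul_mem hR hP, R * Q, (SpG _).mul_mem hR hQ, ?_⟩
  calc R * dgU μ hμ * R⁻¹ = (R * cyU m * R⁻¹) * (R * ((cyU m)⁻¹ * dgU μ hμ) * R⁻¹) := by group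
    _ = _ := by rw [hQ']; nth_rewrite 1 [hP']; group

/-- exponents -/
def ex {n : ℕ} : Fin n ⊕ Fin n → ℕ
  | Sum.inl k => n + k
  | Sum.inr k => n - 1 - k

/-- complementary exponents -/
def ex' {n : ℕ} : Fin n ⊕ Fin n → ℕ
  | Sum.inl k => n - 1 - k
  | Sum.inr k => n + k

lemma ex'_eq {n : ℕ} (p : Fin n ⊕ Fin n) : ex' p = 2 * n - 1 - ex p := by
  rcases p with k | k <;> simp only [ex, ex'] <;> omega

lemma ex_lt {n : ℕ} (p : Fin n ⊕ Fin n) : ex p < 2 * n := by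
  rcases p with k | k <;> simp only [ex] <;> omega

lemma ex_inj {n : ℕ} : Function.Injective (ex : Fin n ⊕ Fin n → ℕ) := by
  rintro (i | i) (j | j) h <;> simp only [ex] at h
  · congr 1; ext; omega
  · omega
  · omega
  · congr 1; ext; omega

lemma sum_ex {n : ℕ} (f : ℕ → ℂ) :
    ∑ p : Fin n ⊕ Fin n, f (ex p) = ∑ i ∈ Finset.range (2 * n), f i := by
  rw [Fintype.sum_sum_type, two_mul, Finset.sum_range_add, add_comm]
  congr 1
  · rw [← Finset.sum_range_reflect]
    exact Fin.sum_univ_eq_sum_range (fun i => f (n - 1 - i)) n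
  · exact Fin.sum_univ_eq_sum_range (fun i => f (n + i)) n

/-- coefficients -/
noncomputable def co {n : ℕ} : Fin n ⊕ Fin n → ℝ
  | Sum.inl k => Real.sqrt ((2 * n - 1).choose (n + k))
  | Sum.inr k => (-1) ^ (n - 1 - k.val) * Real.sqrt ((2 * n - 1).choose (n - 1 - k))

lemma co_sq {n : ℕ} (p : Fin n ⊕ Fin n) : co p * co p = (2 * n - 1).choose (ex p) := by
  rcases p with k | k
  · simp only [co, ex]
    exact Real.mul_self_sqrt (by positivity)
  · simp only [co, ex]
    have h1 : ((-1 : ℝ) ^ (n - 1 - k.val)) * (-1) ^ (n - 1 - k.val) = 1 := by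
      rw [← mul_pow]; simp
    have h2 : Real.sqrt ((2 * n - 1).choose (n - 1 - k)) *
      Real.sqrt ((2 * n - 1).choose (n - 1 - k)) = _ := Real.mul_self_sqrt (by positivity)
    linear_combination (Real.sqrt ((2 * n - 1).choose (n - 1 - k)) *
      Real.sqrt ((2 * n - 1).choose (n - 1 - k))) * h1 + h2

lemma co_ne {n : ℕ} (p : Fin n ⊕ Fin n) : co p ≠ 0 := by
  intro h
  have h1 := co_sq p
  rw [h, mul_zero] at h1
  have h2 : 0 < (2 * n - 1).choose (ex p) := Nat.choose_pos (by have := ex_lt p; omega)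
  have : ((2 * n - 1).choose (ex p) : ℝ) ≠ 0 := by exact_mod_cast h2.ne'
  exact this h1.symm

/-- Veronese map -/
noncomputable def nu (n : ℕ) (v : Fin 1 ⊕ Fin 1 → ℂ) : Fin n ⊕ Fin n → ℂ := fun p =>
  (co p : ℂ) * (v (Sum.inl 0) ^ ex p * v (Sum.inr 0) ^ ex' p)

lemma hm_nu {n : ℕ} (hn : 0 < n) (u v : Fin 1 ⊕ Fin 1 → ℂ) :
    hm (nu n u) (nu n v) = hm u v ^ (2 * n - 1) := by
  have h1 : hm u v = star (u (Sum.inl 0)) * v (Sum.inl 0) +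
      star (u (Sum.inr 0)) * v (Sum.inr 0) := by
    rw [hm_eq]; simp
  rw [h1, add_pow, hm_eq, show 2 * n - 1 + 1 = 2 * n by omega, ← sum_ex]
  refine Finset.sum_congr rfl fun p _ => ?_
  have h2 : ((co p : ℂ)) * co p = (2 * n - 1).choose (ex p) := by exact_mod_cast co_sq p
  have h3 : star (co p : ℂ) = co p := Complex.conj_ofReal _
  rw [← ex'_eq, ← h2]
  simp only [nu, star_mul', star_pow, h3]
  ring

lemma om_nu {n : ℕ} (hn : 0 < n) (u v : Fin 1 ⊕ Fin 1 → ℂ) :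
    om (nu n u) (nu n v) = om u v ^ (2 * n - 1) := by
  have h1 : om u v = u (Sum.inl 0) * v (Sum.inr 0) + - (u (Sum.inr 0) * v (Sum.inl 0)) := by
    rw [om_eq]; simp [sub_eq_add_neg]
  rw [h1, add_pow, om_eq, show 2 * n - 1 + 1 = 2 * n by omega, ← sum_ex, Fintype.sum_sum_type,
    ← Finset.sum_add_distrib]
  refine Finset.sum_congr rfl fun k _ => ?_
  rw [← ex'_eq, ← ex'_eq]
  have h2 := co_sq (Sum.inl k)
  have hch : (2 * n - 1).choose (n - 1 - k) = (2 * n - 1).choose (n + k) := by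
    rw [← Nat.choose_symm (by omega)]; congr 1; omega
  have h3 : co (Sum.inl k) * co (Sum.inr k) = (-1) ^ (n - 1 - k.val) *
      ((2 * n - 1).choose (n + k)) := by
    simp only [co, ex] at h2 ⊢
    rw [hch]
    linear_combination ((-1) ^ (n - 1 - k.val)) * h2
  have h3' : (co (Sum.inl k) : ℂ) * co (Sum.inr k) = (-1) ^ (n - 1 - k.val) *
      ((2 * n - 1).choose (n + k)) := by exact_mod_cast h3
  have h4 : (-1 : ℂ) ^ (n + k.val) = - (-1) ^ (n - 1 - k.val) := by
    have : n + k.val = (n - 1 - k.val) + 2 * k.val + 1 := by omega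
    rw [this, pow_succ, pow_add, pow_mul]; simp
  simp only [nu, ex, ex', hch]
  rw [neg_pow (u (Sum.inr 0) * v (Sum.inl 0)), neg_pow (u (Sum.inr 0) * v (Sum.inl 0)), h4]
  simp only [mul_pow]
  linear_combination (u (Sum.inl 0) ^ (n + k.val) * u (Sum.inr 0) ^ (n - 1 - k.val) *
    v (Sum.inl 0) ^ (n - 1 - k.val) * v (Sum.inr 0) ^ (n + k.val)
    - u (Sum.inl 0) ^ (n - 1 - k.val) * u (Sum.inr 0) ^ (n + k.val) *
    v (Sum.inl 0) ^ (n + k.val) * v (Sum.inr 0) ^ (n - 1 - k.val)) * h3'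

/-- sample points -/
noncomputable def pt {n : ℕ} (q : Fin n ⊕ Fin n) : Fin 1 ⊕ Fin 1 → ℂ :=
  Sum.elim (fun _ => (ex q : ℂ)) (fun _ => 1)

/-- matrix of sampled Veronese vectors after applying `g` -/
noncomputable def BB (n : ℕ) (g : Matrix (Fin 1 ⊕ Fin 1) (Fin 1 ⊕ Fin 1) ℂ) :
    Matrix (Fin n ⊕ Fin n) (Fin n ⊕ Fin n) ℂ :=
  Matrix.of fun p q => nu n (g *ᵥ pt q) p

lemma BB_single {n : ℕ} (g : Matrix (Fin 1 ⊕ Fin 1) (Fin 1 ⊕ Fin 1) ℂ) (q : Fin n ⊕ Fin n) :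
    BB n g *ᵥ Pi.single q 1 = nu n (g *ᵥ pt q) := by
  rw [Matrix.mulVec_single_one]; rfl

lemma BB_det (n : ℕ) : IsUnit (BB n 1).det := by
  let e0 : Fin n ⊕ Fin n → Fin (2 * n) := fun p => ⟨ex p, ex_lt p⟩
  have he0 : Function.Bijective e0 := by
    rw [Fintype.bijective_iff_injective_and_card]
    refine ⟨fun a b h => ex_inj (congrArg Fin.val h), ?_⟩
    simp; omega
  let e := Equiv.ofBijective e0 he0
  have h : BB n 1 = Matrix.diagonal (fun p => (co p : ℂ)) *
      ((Matrix.vandermonde (fun i : Fin (2 * n) => ((i : ℕ) : ℂ)))ᵀ.submatrix e e) := by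
    ext p q
    rw [Matrix.diagonal_mul]
    simp [BB, nu, pt, Matrix.vandermonde_apply, e, e0]
  rw [h, Matrix.det_mul, Matrix.det_diagonal, Matrix.det_submatrix_equiv_self,
    Matrix.det_transpose]
  refine IsUnit.mul ?_ ?_
  · rw [isUnit_iff_ne_zero, Finset.prod_ne_zero_iff]
    intro p _
    exact_mod_cast co_ne p
  · rw [isUnit_iff_ne_zero, Matrix.det_vandermonde_ne_zero_iff]
    intro a b hab
    exact Fin.ext (Nat.cast_injective (R := ℂ) hab)

/-- symmetric power matrix -/
noncomputable def rh (n : ℕ) (g : Matrix (Fin 1 ⊕ Fin 1) (Fin 1 ⊕ Fin 1) ℂ) :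
    Matrix (Fin n ⊕ Fin n) (Fin n ⊕ Fin n) ℂ := BB n g * (BB n 1)⁻¹

lemma rh_BB {n : ℕ} (g : Matrix (Fin 1 ⊕ Fin 1) (Fin 1 ⊕ Fin 1) ℂ) :
    rh n g * BB n 1 = BB n g := by
  rw [rh, mul_assoc, Matrix.nonsing_inv_mul _ (BB_det n), mul_one]

lemma BB_surj {n : ℕ} (u : Fin n ⊕ Fin n → ℂ) : ∃ y, BB n 1 *ᵥ y = u :=
  ⟨(BB n 1)⁻¹ *ᵥ u, by rw [mulVec_mulVec, Matrix.mul_nonsing_inv _ (BB_det n), one_mulVec]⟩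

lemma BB_gram {n : ℕ} (hn : 0 < n) (g : Matrix.unitaryGroup (Fin 1 ⊕ Fin 1) ℂ) :
    star (BB n g.1) * BB n g.1 = star (BB n 1) * BB n 1 := by
  ext p q
  have h : ∀ g, (star (BB n g) * BB n g) p q = hm (nu n (g *ᵥ pt p)) (nu n (g *ᵥ pt q)) :=
    fun g => rfl
  rw [h, h, hm_nu hn, hm_nu hn, hm_of_unit, one_mulVec, one_mulVec]

lemma BB_om {n : ℕ} (hn : 0 < n) {g : Matrix.unitaryGroup (Fin 1 ⊕ Fin 1) ℂ}
    (hg : g ∈ CompactSp 1) :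
    (BB n g.1)ᵀ * sympJ n * BB n g.1 = (BB n 1)ᵀ * sympJ n * BB n 1 := by
  ext p q
  have h : ∀ g, ((BB n g)ᵀ * sympJ n * BB n g) p q =
      om (nu n (g *ᵥ pt p)) (nu n (g *ᵥ pt q)) := by
    intro g
    rw [← BB_single, ← BB_single, om_mulVec]
    simp
  rw [h, h, om_nu hn, om_nu hn, om_of_mem hg, one_mulVec, one_mulVec]

lemma rh_unit {n : ℕ} (hn : 0 < n) (g : Matrix.unitaryGroup (Fin 1 ⊕ Fin 1) ℂ) :
    rh n g.1 ∈ Matrix.unitaryGroup (Fin n ⊕ Fin n) ℂ := by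
  refine unit_of_hm _ fun u v => ?_
  obtain ⟨y, rfl⟩ := BB_surj u
  obtain ⟨z, rfl⟩ := BB_surj v
  rw [mulVec_mulVec, mulVec_mulVec, rh_BB, hm_mulVec, hm_mulVec, BB_gram hn]

lemma rh_nu {n : ℕ} (hn : 0 < n) (g : Matrix.unitaryGroup (Fin 1 ⊕ Fin 1) ℂ)
    (v : Fin 1 ⊕ Fin 1 → ℂ) : rh n g.1 *ᵥ nu n v = nu n (g.1 *ᵥ v) := by
  have hu := rh_unit hn g
  refine hm_ext fun w => ?_
  have hw : ∃ y, BB n g.1 *ᵥ y = w := by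
    obtain ⟨y, hy⟩ := BB_surj (star (rh n g.1) *ᵥ w)
    refine ⟨y, ?_⟩
    rw [← rh_BB, ← mulVec_mulVec, hy, mulVec_mulVec, Matrix.mem_unitaryGroup_iff.mp hu, one_mulVec]
  obtain ⟨y, rfl⟩ := hw
  have h1 := hm_of_unit ⟨rh n g.1, hu⟩ (nu n v) (BB n 1 *ᵥ y)
  dsimp only at h1
  rw [mulVec_mulVec, rh_BB] at h1
  rw [h1]
  have h2 : ∀ (g : Matrix (Fin 1 ⊕ Fin 1) (Fin 1 ⊕ Fin 1) ℂ) (a : Fin n ⊕ Fin n → ℂ),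
      hm a (BB n g *ᵥ y) = ∑ q, hm a (nu n (g *ᵥ pt q)) * y q := by
    intro g a
    unfold hm
    rw [Matrix.dotProduct_mulVec]
    rfl
  rw [h2, h2]
  refine Finset.sum_congr rfl fun q _ => ?_
  rw [hm_nu hn, hm_nu hn, hm_of_unit, one_mulVec]

lemma eq_of_BB {n : ℕ} {A B : Matrix (Fin n ⊕ Fin n) (Fin n ⊕ Fin n) ℂ}
    (h : ∀ v, A *ᵥ nu n v = B *ᵥ nu n v) : A = B := by
  have h1 : A * BB n 1 = B * BB n 1 := by
    refine Matrix.ext_of_mulVec_single fun q => ?_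
    rw [← mulVec_mulVec, ← mulVec_mulVec, BB_single, h]
  have h2 := congrArg (fun X => X * (BB n 1)⁻¹) h1
  simpa [mul_assoc, Matrix.mul_nonsing_inv _ (BB_det n)] using h2

/-- symmetric power representation -/
noncomputable def rho {n : ℕ} (hn : 0 < n) :
    Matrix.unitaryGroup (Fin 1 ⊕ Fin 1) ℂ →* Matrix.unitaryGroup (Fin n ⊕ Fin n) ℂ :=
  MonoidHom.mk' (fun g => ⟨rh n g.1, rh_unit hn g⟩) (fun a b => by
    apply Subtype.ext
    show rh n (a * b).1 = rh n a.1 * rh n b.1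
    refine eq_of_BB fun v => ?_
    rw [rh_nu hn, ← mulVec_mulVec, rh_nu hn, rh_nu hn, Matrix.UnitaryGroup.mul_val, mulVec_mulVec])

lemma rho_mem {n : ℕ} (hn : 0 < n) {g : Matrix.unitaryGroup (Fin 1 ⊕ Fin 1) ℂ}
    (hg : g ∈ CompactSp 1) : rho hn g ∈ CompactSp n := by
  refine mem_of_om _ fun u v => ?_
  obtain ⟨y, rfl⟩ := BB_surj u
  obtain ⟨z, rfl⟩ := BB_surj v
  show om (rh n g.1 *ᵥ _) (rh n g.1 *ᵥ _) = _
  rw [mulVec_mulVec, mulVec_mulVec, rh_BB, om_mulVec, om_mulVec, BB_om hn hg]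

lemma rho_dg {n : ℕ} (hn : 0 < n) :
    rho hn (dgU (fun _ : Fin 1 => ev n 0) (fun _ => ev_unit n 0)) =
      dgU (fun k : Fin n => ev n k) (fun k => ev_unit n k) := by
  apply Subtype.ext
  show rh n (dgU (fun _ : Fin 1 => ev n 0) (fun _ => ev_unit n 0)).1 = dg (fun k : Fin n => ev n k)
  refine eq_of_BB fun v => ?_
  rw [rh_nu hn]
  show nu n (dg _ *ᵥ v) = _
  have hk : ∀ k : Fin n, ev n k = ev n 0 ^ (n + k.val) * star (ev n 0) ^ (n - 1 - k.val) := by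
    intro k
    have h1 : ev n k = ev n 0 ^ (2 * k.val + 1) := by
      unfold ev
      rw [← Complex.exp_nat_mul]
      congr 1
      push_cast; ring
    have h2 : n + k.val = (2 * k.val + 1) + (n - 1 - k.val) := by omega
    rw [h1, h2, pow_add _ (2 * k.val + 1), mul_assoc, ← mul_pow, mul_comm (ev n 0) (star _), ev_unit, one_pow, mul_one]
  funext p
  rcases p with k | k
  · rw [dg_mulVec_inl]
    simp only [nu, dg_mulVec_inl, dg_mulVec_inr, ex, ex', hk k]
    ring
  · rw [dg_mulVec_inr]
    simp only [nu, dg_mulVec_inl, dg_mulVec_inr, ex, ex', hk k, star_mul', star_pow, star_star]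
    ring

/-- angles -/
noncomputable def al {d : ℕ} (i : Fin d) : ℝ := (i : ℝ) / d

/-- unit vectors -/
noncomputable def av {d : ℕ} (x : Fin d × Bool) : Fin 1 ⊕ Fin 1 → ℂ :=
  cond x.2 (Sum.elim (fun _ => (Real.cos (al x.1) : ℂ)) (fun _ => (Real.sin (al x.1) : ℂ)))
    (Sum.elim (fun _ => -(Real.sin (al x.1) : ℂ)) (fun _ => (Real.cos (al x.1) : ℂ)))

/-- projections -/
noncomputable def AA {d : ℕ} (x : Fin d × Bool) : Matrix (Fin 1 ⊕ Fin 1) (Fin 1 ⊕ Fin 1) ℂ :=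
  Matrix.vecMulVec (av x) (av x)

lemma av_dot {d : ℕ} (x y : Fin d × Bool) (h : x.1 = y.1 → x.2 = y.2) :
    av x ⬝ᵥ av y ≠ 0 := by
  obtain ⟨i, b⟩ := x
  obtain ⟨j, c⟩ := y
  have hd : (0 : ℝ) < d := by exact_mod_cast (Nat.zero_le _).trans_lt i.2
  have hi : al i < 1 := by
    unfold al; rw [div_lt_one hd]; exact_mod_cast i.2
  have hj : al j < 1 := by
    unfold al; rw [div_lt_one hd]; exact_mod_cast j.2
  have hi0 : 0 ≤ al i := by unfold al; positivity
  have hj0 : 0 ≤ al j := by unfold al; positivity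
  have hp := Real.pi_gt_three
  have hcos : Real.cos (al i - al j) ≠ 0 :=
    (Real.cos_pos_of_mem_Ioo ⟨by linarith, by linarith⟩).ne'
  have hsin : i ≠ j → Real.sin (al i - al j) ≠ 0 := by
    intro hij h0
    rw [Real.sin_eq_zero_iff_of_lt_of_lt (by linarith) (by linarith)] at h0
    apply hij
    have h1 : al i = al j := by linarith
    unfold al at h1
    rw [div_left_inj' hd.ne'] at h1
    exact Fin.ext (by exact_mod_cast h1)
  rw [Real.cos_sub] at hcos
  rw [Real.sin_sub] at hsin
  simp only at h
  rcases b <;> rcases c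
  · have : av (i, false) ⬝ᵥ av (j, false) =
      ((Real.cos (al i) * Real.cos (al j) + Real.sin (al i) * Real.sin (al j) : ℝ) : ℂ) := by
      simp [av, dotProduct]; ring
    rw [this]; exact_mod_cast hcos
  · have : av (i, false) ⬝ᵥ av (j, true) =
      ((-(Real.sin (al i) * Real.cos (al j) - Real.cos (al i) * Real.sin (al j)) : ℝ) : ℂ) := by
      simp [av, dotProduct]; ring
    rw [this]
    have := hsin (fun hh => by simpa using h hh)
    exact_mod_cast neg_ne_zero.mpr this
  · have : av (i, true) ⬝ᵥ av (j, false) =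
      ((Real.sin (al i) * Real.cos (al j) - Real.cos (al i) * Real.sin (al j) : ℝ) : ℂ) := by
      simp [av, dotProduct]; ring
    rw [this]
    have := hsin (fun hh => by simpa using h hh)
    exact_mod_cast this
  · have : av (i, true) ⬝ᵥ av (j, true) =
      ((Real.cos (al i) * Real.cos (al j) + Real.sin (al i) * Real.sin (al j) : ℝ) : ℂ) := by
      simp [av, dotProduct]
    rw [this]; exact_mod_cast hcos

lemma prod_AA {d : ℕ} (L : List (Fin d × Bool)) : ∀ x, FreeGroup.IsReduced (x :: L) →
    ∃ c : ℂ, c ≠ 0 ∧ ∃ y : Fin d × Bool,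
      ((x :: L).map AA).prod = c • Matrix.vecMulVec (av x) (av y) := by
  induction L with
  | nil => intro x _; exact ⟨1, one_ne_zero, x, by simp [AA]⟩
  | cons z L ih =>
    intro x hx
    rw [FreeGroup.isReduced_cons_cons] at hx
    obtain ⟨c, hc, y, hy⟩ := ih z hx.2
    refine ⟨c * (av x ⬝ᵥ av z), mul_ne_zero hc (av_dot x z hx.1), y, ?_⟩
    rw [List.map_cons, List.prod_cons, hy, AA, Matrix.mul_smul, Matrix.vecMulVec_mul_vecMulVec,
      Matrix.vecMulVec_smul, smul_smul]

lemma prod_AA_ne {d : ℕ} (L : List (Fin d × Bool)) (hL : L ≠ []) (h : FreeGroup.IsReduced L) :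
    ∃ p q, (L.map AA).prod p q ≠ 0 := by
  obtain ⟨x, L, rfl⟩ := List.exists_cons_of_ne_nil hL
  obtain ⟨c, hc, y, hy⟩ := prod_AA L x h
  have hne : ∀ x : Fin d × Bool, ∃ p, av x p ≠ 0 := by
    intro x
    have h1 := av_dot x x (fun _ => rfl)
    by_contra! h2
    exact h1 (Finset.sum_eq_zero fun p _ => by rw [h2]; simp)
  obtain ⟨p, hp⟩ := hne x
  obtain ⟨q, hq⟩ := hne y
  refine ⟨p, q, ?_⟩
  rw [hy, Matrix.smul_apply, Matrix.vecMulVec_apply, smul_eq_mul]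
  exact mul_ne_zero hc (mul_ne_zero hp hq)

/-- opposite letter -/
def op {d : ℕ} (x : Fin d × Bool) : Fin d × Bool := (x.1, !x.2)

open Polynomial in
lemma poly_prod {d : ℕ} (L : List (Fin d × Bool)) :
    ∃ Q : Fin 1 ⊕ Fin 1 → Fin 1 ⊕ Fin 1 → ℂ[X], ∀ p q,
      (∀ z : ℂ, (Q p q).eval z = (L.map (fun x => z ^ 2 • AA x + AA (op x))).prod p q) ∧
      (Q p q).natDegree ≤ 2 * L.length ∧
      (Q p q).coeff (2 * L.length) = (L.map AA).prod p q := by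
  induction L with
  | nil =>
    refine ⟨fun p q => C ((1 : Matrix (Fin 1 ⊕ Fin 1) (Fin 1 ⊕ Fin 1) ℂ) p q), fun p q => ?_⟩
    simp
  | cons x L ih =>
    obtain ⟨Q, hQ⟩ := ih
    refine ⟨fun p q => ∑ r, (X ^ 2 * C (AA x p r) + C (AA (op x) p r)) * Q r q, fun p q => ?_⟩
    refine ⟨?_, ?_, ?_⟩
    · intro z
      rw [List.map_cons, List.prod_cons, Matrix.mul_apply, eval_finsetSum]
      refine Finset.sum_congr rfl fun r _ => ?_
      rw [eval_mul, (hQ r q).1]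
      simp
      exact Or.inl (mul_comm _ _)
    · refine natDegree_sum_le_of_forall_le _ _ fun r _ => ?_
      refine natDegree_mul_le.trans ?_
      have h1 := (hQ r q).2.1
      have h2 : (X ^ 2 * C (AA x p r) + C (AA (op x) p r)).natDegree ≤ 2 := by compute_degree
      rw [List.length_cons]; omega
    · rw [List.map_cons, List.prod_cons, Matrix.mul_apply, finsetSum_coeff]
      refine Finset.sum_congr rfl fun r _ => ?_
      have h1 := (hQ r q).2.1
      rw [← (hQ r q).2.2, add_mul, coeff_add, mul_assoc, List.length_cons,
        show 2 * (L.length + 1) = 2 * L.length + 2 by ring, coeff_X_pow_mul, coeff_C_mul,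
        coeff_C_mul, coeff_eq_zero_of_natDegree_lt (by omega : (Q r q).natDegree < 2 * L.length + 2)]
      ring

/-- letters -/
noncomputable def Gm {d : ℕ} (x : Fin d × Bool) (t : ℝ) :
    Matrix (Fin 1 ⊕ Fin 1) (Fin 1 ⊕ Fin 1) ℂ :=
  Complex.exp (t * Complex.I) • AA x + star (Complex.exp (t * Complex.I)) • AA (op x)

lemma cs {d : ℕ} (i : Fin d) : (Real.cos (al i) : ℂ) ^ 2 + (Real.sin (al i) : ℂ) ^ 2 = 1 := by
  exact_mod_cast Real.cos_sq_add_sin_sq (al i)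

lemma star_AA {d : ℕ} (x : Fin d × Bool) : star (AA x) = AA x := by
  have h : ∀ p, star (av x p) = av x p := by
    intro p
    obtain ⟨i, b⟩ := x
    rcases b <;> rcases p with k | k <;> simp [av, -Complex.ofReal_cos, -Complex.ofReal_sin]
  ext p q
  rw [Matrix.star_apply, AA, Matrix.vecMulVec_apply, Matrix.vecMulVec_apply, star_mul', h, h,
    mul_comm]

lemma op_op {d : ℕ} (x : Fin d × Bool) : op (op x) = x := by simp [op]

lemma star_Gm {d : ℕ} (x : Fin d × Bool) (t : ℝ) : star (Gm x t) = Gm (op x) t := by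
  unfold Gm
  rw [star_add, star_smul, star_smul, star_AA, star_AA, star_star, op_op, add_comm]

lemma Gm_entries {d : ℕ} (i : Fin d) (t : ℝ) (u : Fin 1 ⊕ Fin 1 → ℂ) :
    (Gm (i, true) t *ᵥ u) (Sum.inl 0) =
      (Complex.exp (t * Complex.I) * (Real.cos (al i) : ℂ) ^ 2 +
        star (Complex.exp (t * Complex.I)) * (Real.sin (al i) : ℂ) ^ 2) * u (Sum.inl 0) +
      (Complex.exp (t * Complex.I) - star (Complex.exp (t * Complex.I))) *
        (Real.cos (al i) : ℂ) * (Real.sin (al i) : ℂ) * u (Sum.inr 0) ∧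
    (Gm (i, true) t *ᵥ u) (Sum.inr 0) =
      (Complex.exp (t * Complex.I) - star (Complex.exp (t * Complex.I))) *
        (Real.cos (al i) : ℂ) * (Real.sin (al i) : ℂ) * u (Sum.inl 0) +
      (Complex.exp (t * Complex.I) * (Real.sin (al i) : ℂ) ^ 2 +
        star (Complex.exp (t * Complex.I)) * (Real.cos (al i) : ℂ) ^ 2) * u (Sum.inr 0) := by
  constructor
  · simp [Gm, AA, av, op, mulVec, dotProduct, Matrix.vecMulVec_apply]; ring
  · simp [Gm, AA, av, op, mulVec, dotProduct, Matrix.vecMulVec_apply]; ring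

lemma Gm_unit {d : ℕ} (i : Fin d) (t : ℝ) :
    Gm (i, true) t ∈ Matrix.unitaryGroup (Fin 1 ⊕ Fin 1) ℂ := by
  refine unit_of_hm _ fun u v => ?_
  have h1 := cs i
  have h2 := exp_unit t
  have hc : star (Real.cos (al i) : ℂ) = Real.cos (al i) := Complex.conj_ofReal _
  have hs : star (Real.sin (al i) : ℂ) = Real.sin (al i) := Complex.conj_ofReal _
  rw [hm_eq, hm_eq]
  simp only [Fintype.sum_sum_type, Finset.univ_unique, Fin.default_eq_zero, Finset.sum_singleton,
    (Gm_entries i t _).1, (Gm_entries i t _).2, star_add, star_sub, star_mul', star_pow, star_star,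
    hc, hs]
  set z := Complex.exp (t * Complex.I)
  set zb := star z
  set c := (Real.cos (al i) : ℂ)
  set s := (Real.sin (al i) : ℂ)
  generalize star (u (Sum.inl 0)) = a
  generalize star (u (Sum.inr 0)) = b
  have key : (c ^ 2 + s ^ 2) ^ 2 * (zb * z) = 1 := by rw [h1, h2]; ring
  have hA : (zb * c ^ 2 + z * s ^ 2) * (z * c ^ 2 + zb * s ^ 2) +
      (zb - z) * c * s * ((z - zb) * c * s) = 1 := by linear_combination key
  have hB : (zb - z) * c * s * ((z - zb) * c * s) +
      (zb * s ^ 2 + z * c ^ 2) * (z * s ^ 2 + zb * c ^ 2) = 1 := by linear_combination key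
  linear_combination (a * v (Sum.inl 0)) * hA + (b * v (Sum.inr 0)) * hB

/-- generators -/
noncomputable def gU {d : ℕ} (t : ℝ) (i : Fin d) : Matrix.unitaryGroup (Fin 1 ⊕ Fin 1) ℂ :=
  ⟨Gm (i, true) t, Gm_unit i t⟩

lemma gU_mem {d : ℕ} (t : ℝ) (i : Fin d) : gU t i ∈ CompactSp 1 := by
  refine mem_of_om _ fun u v => ?_
  show om (Gm (i, true) t *ᵥ u) (Gm (i, true) t *ᵥ v) = _
  have h1 := cs i
  have h2 := exp_unit t
  rw [om_eq, om_eq]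
  simp only [Finset.univ_unique, Fin.default_eq_zero, Finset.sum_singleton,
    (Gm_entries i t _).1, (Gm_entries i t _).2]
  set z := Complex.exp (t * Complex.I)
  set zb := star z
  set c := (Real.cos (al i) : ℂ)
  set s := (Real.sin (al i) : ℂ)
  have key : (c ^ 2 + s ^ 2) ^ 2 * (zb * z) = 1 := by rw [h1, h2]; ring
  linear_combination (u (Sum.inl 0) * v (Sum.inr 0) - u (Sum.inr 0) * v (Sum.inl 0)) * key

lemma lift_val {d : ℕ} (w : FreeGroup (Fin d)) (t : ℝ) :
    (FreeGroup.lift (gU t) w).1 = (w.toWord.map (fun x => Gm x t)).prod := by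
  conv_lhs => rw [← FreeGroup.mk_toWord (x := w), FreeGroup.lift_mk]
  have h := map_list_prod (Submonoid.subtype (Matrix.unitaryGroup (Fin 1 ⊕ Fin 1) ℂ))
    (w.toWord.map fun x => cond x.2 (gU t x.1) (gU t x.1)⁻¹)
  refine h.trans ?_
  rw [List.map_map]
  congr 1
  refine List.map_congr_left fun x _ => ?_
  obtain ⟨i, b⟩ := x
  rcases b
  · show star (Gm (i, true) t) = _
    rw [star_Gm]; rfl
  · rfl

lemma list_smul {d : ℕ} (L : List (Fin d × Bool)) (z : ℂ)
    (f : Fin d × Bool → Matrix (Fin 1 ⊕ Fin 1) (Fin 1 ⊕ Fin 1) ℂ) :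
    (L.map (fun x => z • f x)).prod = z ^ L.length • (L.map f).prod := by
  induction L with
  | nil => simp
  | cons x L ih =>
    simp only [List.map_cons, List.prod_cons, ih, List.length_cons]
    rw [Matrix.smul_mul, Matrix.mul_smul, smul_smul, pow_succ, mul_comm]

lemma exists_nontriv {d : ℕ} (w : FreeGroup (Fin d)) (hw : w ≠ 1) :
    ∃ t : ℝ, FreeGroup.lift (gU t) w ≠ 1 := by
  by_contra! h
  set L := w.toWord with hL
  have hL0 : L ≠ [] := fun h0 => hw (FreeGroup.toWord_eq_nil_iff.mp h0)
  obtain ⟨p, q, hpq⟩ := prod_AA_ne L hL0 FreeGroup.isReduced_toWord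
  obtain ⟨Q, hQ⟩ := poly_prod L
  obtain ⟨he, -, hc⟩ := hQ p q
  have hlen : 0 < L.length := List.length_pos_of_ne_nil hL0
  have hz : ∀ t : ℝ, (Q p q).eval (Complex.exp (t * Complex.I)) =
      (Polynomial.X ^ L.length * Polynomial.C
        ((1 : Matrix (Fin 1 ⊕ Fin 1) (Fin 1 ⊕ Fin 1) ℂ) p q)).eval
          (Complex.exp (t * Complex.I)) := by
    intro t
    set z := Complex.exp (t * Complex.I) with hzd
    have h1 : (L.map (fun x => Gm x t)).prod = 1 := by
      rw [← lift_val, h t]; rfl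
    have h2 : (fun x : Fin d × Bool => z ^ 2 • AA x + AA (op x)) = fun x => z • Gm x t := by
      funext x
      unfold Gm
      rw [smul_add, smul_smul, smul_smul, ← hzd, mul_comm z (star z), hzd, exp_unit, one_smul, sq]
    rw [he, h2, list_smul, h1]
    simp
    exact mul_comm _ _
  have heq := Polynomial.eq_of_infinite_eval_eq _ _ (Set.Infinite.mono
    (s := (fun t : ℝ => Complex.exp (t * Complex.I)) '' Set.Ioc (-Real.pi) Real.pi)
    (by rintro _ ⟨t, -, rfl⟩; exact hz t)
    (Set.Infinite.image (by
      intro a ha b hb hab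
      have h1 := congrArg Complex.arg hab
      simp only [Complex.exp_mul_I] at h1
      rwa [Complex.arg_cos_add_sin_mul_I ha, Complex.arg_cos_add_sin_mul_I hb] at h1)
      (Set.Ioc_infinite (by linarith [Real.pi_pos]))))
  rw [heq, Polynomial.coeff_mul_C, Polynomial.coeff_X_pow, if_neg (by omega), zero_mul] at hc
  exact hpq hc.symm

/-- shape of elements of Sp(1) -/
lemma sp1_shape {h : Matrix.unitaryGroup (Fin 1 ⊕ Fin 1) ℂ} (hh : h ∈ CompactSp 1) :
    h.1 (Sum.inl 0) (Sum.inr 0) = - star (h.1 (Sum.inr 0) (Sum.inl 0)) ∧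
    h.1 (Sum.inr 0) (Sum.inr 0) = star (h.1 (Sum.inl 0) (Sum.inl 0)) ∧
    star (h.1 (Sum.inl 0) (Sum.inl 0)) * h.1 (Sum.inl 0) (Sum.inl 0) +
      star (h.1 (Sum.inr 0) (Sum.inl 0)) * h.1 (Sum.inr 0) (Sum.inl 0) = 1 := by
  have h1 := sg_mulVec hh (Pi.single (Sum.inl 0) 1)
  have h2 : sg (Pi.single (Sum.inl 0) 1 : Fin 1 ⊕ Fin 1 → ℂ) = Pi.single (Sum.inr 0) 1 := by
    funext p
    rcases p with k | k
    · simp [sg]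
    · have : k = 0 := Subsingleton.elim _ _
      subst this; simp [sg]
  rw [h2, Matrix.mulVec_single_one, Matrix.mulVec_single_one] at h1
  refine ⟨congrFun h1 (Sum.inl 0), congrFun h1 (Sum.inr 0), ?_⟩
  have h3 := hm_of_unit h (Pi.single (Sum.inl 0) 1) (Pi.single (Sum.inl 0) 1)
  rw [Matrix.mulVec_single_one, hm_eq, hm_eq] at h3
  simpa using h3

lemma sp1_ne {h : Matrix.unitaryGroup (Fin 1 ⊕ Fin 1) ℂ} (hh : h ∈ CompactSp 1) (hne : h ≠ 1) :
    (h.1 (Sum.inl 0) (Sum.inl 0)).re < 1 := by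
  obtain ⟨h1, h2, h3⟩ := sp1_shape hh
  by_contra! hge
  apply hne
  set a := h.1 (Sum.inl 0) (Sum.inl 0)
  set b := h.1 (Sum.inr 0) (Sum.inl 0)
  have h4 := congrArg Complex.re h3
  simp [Complex.mul_re] at h4
  have hare : a.re = 1 := by
    nlinarith [mul_self_nonneg a.im, mul_self_nonneg b.re, mul_self_nonneg b.im]
  have haim : a.im = 0 := by
    nlinarith [mul_self_nonneg a.im, mul_self_nonneg b.re, mul_self_nonneg b.im]
  have hbre : b.re = 0 := by
    nlinarith [mul_self_nonneg a.im, mul_self_nonneg b.re, mul_self_nonneg b.im]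
  have hbim : b.im = 0 := by
    nlinarith [mul_self_nonneg a.im, mul_self_nonneg b.re, mul_self_nonneg b.im]
  have ha : a = 1 := Complex.ext hare haim
  have hb : b = 0 := Complex.ext hbre hbim
  apply Subtype.ext
  ext p q
  rcases p with i | i <;> rcases q with j | j <;>
    (obtain rfl : i = 0 := Subsingleton.elim _ _) <;>
    (obtain rfl : j = 0 := Subsingleton.elim _ _)
  · show a = _; rw [ha]; simp
  · rw [h1, hb]; simp
  · show b = _; rw [hb]; simp
  · rw [h2, ha]; simp

lemma sp1_eig {h : Matrix.unitaryGroup (Fin 1 ⊕ Fin 1) ℂ} (hh : h ∈ CompactSp 1) (l : ℂ)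
    (hl : star l * l = 1) (hre : (h.1 (Sum.inl 0) (Sum.inl 0)).re = l.re) :
    ∃ v, v ≠ 0 ∧ h.1 *ᵥ v = l • v := by
  obtain ⟨h1, h2, h3⟩ := sp1_shape hh
  have hmv : ∀ (v : Fin 1 ⊕ Fin 1 → ℂ) p, (h.1 *ᵥ v) p =
      h.1 p (Sum.inl 0) * v (Sum.inl 0) + h.1 p (Sum.inr 0) * v (Sum.inr 0) := by
    intro v p; simp [mulVec, dotProduct]
  set a := h.1 (Sum.inl 0) (Sum.inl 0)
  set b := h.1 (Sum.inr 0) (Sum.inl 0)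
  have h4 : a + star a = l + star l := by
    apply Complex.ext <;> simp [hre]
  by_cases hb : b = 0
  · by_cases ha : a = l
    · refine ⟨Pi.single (Sum.inl 0) 1, by simp, ?_⟩
      funext p
      rw [hmv]
      rcases p with i | i <;> (obtain rfl : i = 0 := Subsingleton.elim _ _)
      · show a * _ + _ = _
        simp [ha]
      · show b * _ + _ = _
        simp [hb]
    · refine ⟨Pi.single (Sum.inr 0) 1, by simp, ?_⟩
      have h5 : (a - l) * (star a - l) = 0 := by
        have h6 : star a * a = 1 := by simpa [hb] using h3
        linear_combination h6 - l * h4 - hl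
      have h7 : star a = l := by
        rcases mul_eq_zero.mp h5 with h | h
        · exact absurd (sub_eq_zero.mp h) ha
        · exact sub_eq_zero.mp h
      funext p
      rw [hmv]
      rcases p with i | i <;> (obtain rfl : i = 0 := Subsingleton.elim _ _)
      · rw [h1, hb]; simp
      · rw [h2, h7]; simp
  · refine ⟨Sum.elim (fun _ => star b) (fun _ => a - l), ?_, ?_⟩
    · intro h0
      have := congrFun h0 (Sum.inl 0)
      simp at this
      exact hb this
    · funext p
      rw [hmv]
      rcases p with i | i <;> (obtain rfl : i = 0 := Subsingleton.elim _ _)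
      · rw [h1]
        show a * star b + -star b * (a - l) = l * star b
        ring
      · rw [h2]
        show b * star b + star a * (a - l) = l * (a - l)
        linear_combination h3 - l * h4 - hl

lemma word_bound {d : ℕ} (w : FreeGroup (Fin d)) (hw : w ≠ 1) :
    ∃ N : ℕ, ∀ n : ℕ, N ≤ n → ∀ hn : 0 < n,
      dgU (fun k : Fin n => ev n k) (fun k => ev_unit n k) ∈ wordValuesIn w (CompactSp n) := by
  obtain ⟨t0, ht0⟩ := exists_nontriv w hw
  have hmem : ∀ t, FreeGroup.lift (gU t) w ∈ wordValuesIn w (CompactSp 1) := fun t =>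
    ⟨gU t, gU_mem t, rfl⟩
  have hsp : ∀ t, FreeGroup.lift (gU t) w ∈ CompactSp 1 := by
    intro t
    have : (FreeGroup.lift (gU t : Fin d → _)).range ≤ SpG 1 := by
      refine FreeGroup.range_lift_le ?_
      rintro _ ⟨i, rfl⟩
      exact gU_mem t i
    exact this ⟨w, rfl⟩
  let f : ℝ → ℝ := fun t => ((FreeGroup.lift (gU t) w).1 (Sum.inl 0) (Sum.inl 0)).re
  have hf : Continuous f := by
    have h1 : Continuous fun t : ℝ => (w.toWord.map (fun x => Gm x t)).prod := by
      refine continuous_list_prod _ fun x _ => ?_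
      unfold Gm
      fun_prop
    simp only [f, lift_val]
    exact Complex.continuous_re.comp (h1.matrix_elem _ _)
  have hlt : f t0 < 1 := sp1_ne (hsp t0) ht0
  have hf0 : f 0 = 1 := by
    have h1 : (gU 0 : Fin d → _) = fun _ => 1 := by
      funext i
      apply Subtype.ext
      refine Matrix.ext_iff_mulVec.mpr ?_
      intro u
      show Gm (i, true) 0 *ᵥ u = (1 : Matrix (Fin 1 ⊕ Fin 1) (Fin 1 ⊕ Fin 1) ℂ) *ᵥ u
      have h2 := Gm_entries i 0 u
      have h3 := cs i
      have h0 : Complex.exp (((0 : ℝ) : ℂ) * Complex.I) = 1 := by simp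
      rw [h0, star_one] at h2
      rw [one_mulVec]
      funext p
      rcases p with k | k <;> (obtain rfl : k = 0 := Subsingleton.elim _ _)
      · rw [h2.1]; linear_combination u (Sum.inl 0) * h3
      · rw [h2.2]; linear_combination u (Sum.inr 0) * h3
    have h4 : FreeGroup.lift (gU 0 : Fin d → _) = 1 := by
      rw [h1]; ext i; simp
    simp only [f]
    rw [h4]
    simp
  have hlim : Filter.Tendsto (fun n : ℕ => Real.cos (Real.pi / (2 * n))) Filter.atTop (nhds 1) := by
    have h1 : Filter.Tendsto (fun n : ℕ => Real.pi / (2 * (n : ℝ))) Filter.atTop (nhds 0) :=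
      Filter.Tendsto.const_div_atTop
        (Filter.Tendsto.const_mul_atTop two_pos tendsto_natCast_atTop_atTop) _
    have := (Real.continuous_cos.tendsto 0).comp h1
    rwa [Real.cos_zero] at this
  obtain ⟨N, hN⟩ := Filter.eventually_atTop.mp (hlim.eventually (lt_mem_nhds hlt))
  refine ⟨N, fun n hNn hn => ?_⟩
  obtain ⟨t, ht⟩ := mem_range_of_exists_le_of_exists_ge hf (c := Real.cos (Real.pi / (2 * n)))
    ⟨t0, (hN n hNn).le⟩ ⟨0, by rw [hf0]; exact Real.cos_le_one _⟩
  have hevre : (ev n 0).re = Real.cos (Real.pi / (2 * n)) := by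
    unfold ev
    rw [Complex.exp_ofReal_mul_I_re]
    simp
  obtain ⟨P, hP, hPe⟩ := conj_of_eig (hsp t) (fun _ => ev n 0) (fun _ => ev_unit n 0)
    (fun i j hij => absurd (Subsingleton.elim i j) hij)
    (fun _ _ => ev_h2 (⟨0, hn⟩ : Fin n) ⟨0, hn⟩)
    (fun _ => sp1_eig (hsp t) (ev n 0) (ev_unit n 0) (by rw [hevre]; exact ht))
  have h5 : dgU (fun _ : Fin 1 => ev n 0) (fun _ => ev_unit n 0) ∈
      wordValuesIn w (CompactSp 1) := by
    have := word_conj w ((SpG 1).inv_mem hP) (hmem t)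
    rw [hPe] at this
    have h6 : P⁻¹ * (P * dgU (fun _ : Fin 1 => ev n 0) (fun _ => ev_unit n 0) * P⁻¹) * P⁻¹⁻¹ =
      dgU (fun _ : Fin 1 => ev n 0) (fun _ => ev_unit n 0) := by group
    rwa [h6] at this
  have h7 := word_map (rho hn) w (CompactSp 1) (CompactSp n) (fun s hs => rho_mem hn hs) h5
  rwa [rho_dg] at h7

end SpW

/-- For all nontrivial words `w₁, w₂`, there is `N` such that for all `n ≥ N`,
`Sp(n) = w₁(Sp(n)) · w₂(Sp(n))`. -/
theorem sp_waring_two {d₁ d₂ : ℕ} (w₁ : FreeGroup (Fin d₁)) (w₂ : FreeGroup (Fin d₂))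
    (hw₁ : w₁ ≠ 1) (hw₂ : w₂ ≠ 1) :
    ∃ N : ℕ, ∀ n : ℕ, N ≤ n → ∀ x ∈ CompactSp n,
      ∃ g₁ ∈ wordValuesIn w₁ (CompactSp n), ∃ g₂ ∈ wordValuesIn w₂ (CompactSp n),
        x = g₁ * g₂ := by
  obtain ⟨N₁, h₁⟩ := SpW.word_bound w₁ hw₁
  obtain ⟨N₂, h₂⟩ := SpW.word_bound w₂ hw₂
  refine ⟨max (max N₁ N₂) 1, fun n hn x hx => ?_⟩
  have hn0 : 0 < n := by omega
  obtain ⟨P, hP, Q, hQ, hPQ⟩ := SpW.factor hn0 hx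
  exact ⟨_, SpW.word_conj w₁ hP (h₁ n (by omega) hn0), _,
    SpW.word_conj w₂ hQ (h₂ n (by omega) hn0), hPQ⟩
end
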